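/- arXiv:2112.06518 — 10 statements merged into one kernel-verified Lean document; each statement's English description precedes it below -/
import Mathlib

section
/- Let (𝒢, β) be a fractional partition of [M] and let A_1, …, A_M be nonempty compact subsets of ℝ^d. Then |A_1 + ⋯ + A_M| ≥ Σ_{S∈𝒢} β_S · |Σ_{i∈S} A_i|, i.e., the volume functional is fractionally superadditive with respect to Minkowski summation on compact subsets of ℝ^d. -/
open Pointwise MeasureTheory

/-!
Let `f` be a coordinate function, and let `p i`, `q i` be points of `A i` where it is minimal and
maximal. For each set `S` of indices, replacing the points `p j`, `j ∈ S`, by `q j` one index at a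
time cuts the range of `f` on `∑ j ∈ S, A j` into one interval for each `i ∈ S`. Adding the current
chosen points of the indices outside `S` translates the slab of `∑ j ∈ S, A j` belonging to `i` into
the slab of `∑ j, A j` belonging to `i`. Hence the volumes `V i` of the slabs of the full sum
satisfy `|∑ j ∈ S, A j| ≤ ∑ i ∈ S, V i` for every `S` and `∑ i, V i ≤ |∑ j, A j|`, and averaging
over a fractional partition gives the theorem.
-/

section Allocation

variable {ι K : Type*} [Fintype ι] [DecidableEq ι] [Semiring K] [PartialOrder K]
  [IsOrderedRing K]

lemma sum_mul_le_sum_of_le_sum {𝒢 : Finset (Finset ι)} {β v : Finset ι → K} {V : ι → K}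
    (hβ : ∀ S ∈ 𝒢, 0 ≤ β S) (hpack : ∀ i, ∑ S ∈ 𝒢 with i ∈ S, β S ≤ 1)
    (hV : ∀ i, 0 ≤ V i) (hv : ∀ S ∈ 𝒢, v S ≤ ∑ i ∈ S, V i) :
    ∑ S ∈ 𝒢, β S * v S ≤ ∑ i, V i :=
  calc ∑ S ∈ 𝒢, β S * v S
      ≤ ∑ S ∈ 𝒢, ∑ i ∈ S, β S * V i := by
        refine Finset.sum_le_sum fun S hS => ?_
        rw [← Finset.mul_sum]
        exact mul_le_mul_of_nonneg_left (hv S hS) (hβ S hS)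
    _ = ∑ i, ∑ S ∈ 𝒢 with i ∈ S, β S * V i :=
        Finset.sum_comm' fun S i => by simp [and_comm]
    _ = ∑ i, (∑ S ∈ 𝒢 with i ∈ S, β S) * V i := by simp only [Finset.sum_mul]
    _ ≤ ∑ i, V i := Finset.sum_le_sum fun i _ => mul_le_of_le_one_left (hV i) (hpack i)

end Allocation

section MixedSum

variable {ι E : Type*} [AddCommMonoid E] {r : ι → ℕ} {p q : ι → E} {S : Finset ι}

/-- The sum over `S` of the points `q j` for the indices of rank `r j < k` and of the points `p j`
for the others. As `k` grows it moves from `∑ j ∈ S, p j` to `∑ j ∈ S, q j`, and for injective `r`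
it changes one summand at a time. -/
def mixedSum (r : ι → ℕ) (p q : ι → E) (S : Finset ι) (k : ℕ) : E :=
  ∑ j ∈ S, if r j < k then q j else p j

lemma mixedSum_zero : mixedSum r p q S 0 = ∑ j ∈ S, p j := by
  simp only [mixedSum, not_lt_zero, if_false]

lemma mixedSum_of_forall_lt {k : ℕ} (h : ∀ j ∈ S, r j < k) :
    mixedSum r p q S k = ∑ j ∈ S, q j :=
  Finset.sum_congr rfl fun j hj => if_pos (h j hj)

lemma mixedSum_succ_of_forall_ne {k : ℕ} (h : ∀ j ∈ S, r j ≠ k) :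
    mixedSum r p q S (k + 1) = mixedSum r p q S k :=
  Finset.sum_congr rfl fun j hj => by simp only [Nat.lt_succ_iff_lt_or_eq, h j hj, or_false]

lemma mixedSum_add_mixedSum_compl [Fintype ι] [DecidableEq ι] (k : ℕ) :
    mixedSum r p q S k + mixedSum r p q Sᶜ k = mixedSum r p q Finset.univ k :=
  Finset.sum_add_sum_compl S _

lemma mixedSum_mem_sum {A : ι → Set E} (hp : ∀ i, p i ∈ A i) (hq : ∀ i, q i ∈ A i) (k : ℕ) :
    mixedSum r p q S k ∈ ∑ j ∈ S, A j :=
  Set.finsetSum_mem_finsetSum _ _ _ fun j _ => by split_ifs; exacts [hq j, hp j]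

end MixedSum

section Slab

variable {ι E R : Type*} [AddCommMonoid E] [AddCommMonoid R] [LinearOrder R]
  {f : E →+ R} {r : ι → ℕ} {p q : ι → E}

/-- The slab of points whose `f`-value lies between those of two consecutive mixed sums over `S`,
used to cut `∑ j ∈ S, A j` into pieces. It is half-open, so that consecutive slabs are disjoint. -/
def slab (f : E →+ R) (r : ι → ℕ) (p q : ι → E) (S : Finset ι) (k : ℕ) : Set E :=
  f ⁻¹' Set.Ico (f (mixedSum r p q S k)) (f (mixedSum r p q S (k + 1)))

lemma preimage_Ico_subset_biUnion_slab (f : E →+ R) (r : ι → ℕ) (p q : ι → E) (S : Finset ι) :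
    f ⁻¹' Set.Ico (f (∑ j ∈ S, p j)) (f (∑ j ∈ S, q j)) ⊆ ⋃ i ∈ S, slab f r p q S (r i) := by
  have hlast : mixedSum r p q S (S.sup r + 1) = ∑ j ∈ S, q j :=
    mixedSum_of_forall_lt fun j hj => Nat.lt_succ_of_le (Finset.le_sup hj)
  rw [← mixedSum_zero (r := r) (q := q), ← hlast]
  intro x hx
  obtain ⟨k, -, hxk⟩ := Set.mem_iUnion₂.1
    (Ico_subset_biUnion_Ico _ (fun k => f (mixedSum r p q S k)) hx)
  obtain ⟨i, hi, rfl⟩ : ∃ i ∈ S, r i = k := by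
    by_contra! h
    rw [mixedSum_succ_of_forall_ne h, Set.Ico_self] at hxk
    exact hxk
  exact Set.mem_biUnion hi hxk

lemma add_mixedSum_compl_mem_slab [Fintype ι] [DecidableEq ι] [IsOrderedCancelAddMonoid R]
    (hr : r.Injective) {S : Finset ι} {i : ι} (hi : i ∈ S) {x : E} (hx : x ∈ slab f r p q S (r i)) :
    mixedSum r p q Sᶜ (r i) + x ∈ slab f r p q Finset.univ (r i) := by
  have hcompl : mixedSum r p q Sᶜ (r i + 1) = mixedSum r p q Sᶜ (r i) :=
    mixedSum_succ_of_forall_ne fun j hj => hr.ne fun hji => Finset.mem_compl.1 hj (hji ▸ hi)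
  obtain ⟨hlower, hupper⟩ := hx
  rw [slab, Set.mem_preimage, add_comm _ x, ← mixedSum_add_mixedSum_compl (S := S),
    ← mixedSum_add_mixedSum_compl (S := S), hcompl]
  simp only [map_add]
  exact ⟨by gcongr, by gcongr⟩

variable [IsOrderedAddMonoid R]

lemma monotone_map_mixedSum (hpq : ∀ i, f (p i) ≤ f (q i)) (S : Finset ι) :
    Monotone fun k => f (mixedSum r p q S k) := by
  intro k l hkl
  simp only [mixedSum, map_sum]
  refine Finset.sum_le_sum fun j _ => ?_
  by_cases hk : r j < k
  · rw [if_pos hk, if_pos (hk.trans_le hkl)]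
  · rw [if_neg hk]
    split_ifs
    exacts [hpq j, le_rfl]

lemma pairwise_disjoint_slab (hpq : ∀ i, f (p i) ≤ f (q i)) (S : Finset ι) :
    Pairwise (Function.onFun Disjoint (slab f r p q S)) := fun _ _ hkl =>
  ((monotone_map_mixedSum hpq S).pairwise_disjoint_on_Ico_succ hkl).preimage f

lemma map_mem_Icc_of_mem_sum {A : ι → Set E} (hp : ∀ i, IsMinOn f (A i) (p i))
    (hq : ∀ i, IsMaxOn f (A i) (q i)) {S : Finset ι} {x : E} (hx : x ∈ ∑ j ∈ S, A j) :
    f x ∈ Set.Icc (f (∑ j ∈ S, p j)) (f (∑ j ∈ S, q j)) := by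
  obtain ⟨g, hg, rfl⟩ := (Set.mem_finsetSum _ _ _).1 hx
  simp only [map_sum]
  exact ⟨Finset.sum_le_sum fun j hj => hp j (hg hj), Finset.sum_le_sum fun j hj => hq j (hg hj)⟩

end Slab

section Measure

variable {ι E R : Type*} [AddCommGroup E] [MeasurableSpace E] {μ : Measure E}
  [AddCommMonoid R] [LinearOrder R] {f : E →+ R}
  {r : ι → ℕ} {p q : ι → E} {A : ι → Set E}

lemma measure_sum_inter_slab_le [Fintype ι] [MeasurableAdd E] [μ.IsAddLeftInvariant]
    [IsOrderedCancelAddMonoid R] (hr : r.Injective) (hpA : ∀ i, p i ∈ A i) (hqA : ∀ i, q i ∈ A i)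
    {S : Finset ι} {i : ι} (hi : i ∈ S) :
    μ ((∑ j ∈ S, A j) ∩ slab f r p q S (r i)) ≤
      μ ((∑ j, A j) ∩ slab f r p q Finset.univ (r i)) := by
  classical
  rw [← measure_preimage_add μ (mixedSum r p q Sᶜ (r i)) ((∑ j, A j) ∩ _)]
  refine measure_mono fun x ⟨hxA, hx⟩ => ⟨?_, add_mixedSum_compl_mem_slab hr hi hx⟩
  rw [← Finset.sum_compl_add_sum S]
  exact Set.add_mem_add (mixedSum_mem_sum hpA hqA _) hxA

lemma measure_sum_le_sum_measure_inter_slab [IsOrderedAddMonoid R] (hμ : ∀ y, μ (f ⁻¹' {y}) = 0)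
    (hp : ∀ i, IsMinOn f (A i) (p i)) (hq : ∀ i, IsMaxOn f (A i) (q i)) (r : ι → ℕ)
    (S : Finset ι) :
    μ (∑ j ∈ S, A j) ≤ ∑ i ∈ S, μ ((∑ j ∈ S, A j) ∩ slab f r p q S (r i)) := by
  set top : R := f (∑ j ∈ S, q j)
  have hcover : ∑ j ∈ S, A j ⊆
      (⋃ i ∈ S, (∑ j ∈ S, A j) ∩ slab f r p q S (r i)) ∪ f ⁻¹' {top} := by
    intro x hx
    obtain ⟨hlower, hupper⟩ := map_mem_Icc_of_mem_sum hp hq hx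
    rcases hupper.lt_or_eq with hlt | heq
    · rw [← Set.inter_iUnion₂]
      exact .inl ⟨hx, preimage_Ico_subset_biUnion_slab f r p q S ⟨hlower, hlt⟩⟩
    · exact .inr heq
  calc μ (∑ j ∈ S, A j)
      ≤ μ ((⋃ i ∈ S, (∑ j ∈ S, A j) ∩ slab f r p q S (r i)) ∪ f ⁻¹' {top}) :=
        measure_mono hcover
    _ ≤ μ (⋃ i ∈ S, (∑ j ∈ S, A j) ∩ slab f r p q S (r i)) + μ (f ⁻¹' {top}) :=
        measure_union_le _ _
    _ = μ (⋃ i ∈ S, (∑ j ∈ S, A j) ∩ slab f r p q S (r i)) := by rw [hμ, add_zero]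
    _ ≤ ∑ i ∈ S, μ ((∑ j ∈ S, A j) ∩ slab f r p q S (r i)) := measure_biUnion_finset_le _ _

variable [TopologicalSpace R] [ClosedIciTopology R] [MeasurableSpace R] [OpensMeasurableSpace R]

lemma measurableSet_slab (hf : Measurable f) (S : Finset ι) (k : ℕ) :
    MeasurableSet (slab f r p q S k) :=
  hf measurableSet_Ico

lemma sum_measure_inter_slab_le [Fintype ι] [IsOrderedAddMonoid R] (hf : Measurable f)
    (hr : r.Injective) (hpq : ∀ i, f (p i) ≤ f (q i)) (S : Finset ι) (T : Set E) :
    ∑ i, μ (T ∩ slab f r p q S (r i)) ≤ μ T := by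
  have hmeas : ∀ i, MeasurableSet (slab f r p q S (r i)) := fun i => measurableSet_slab hf S (r i)
  calc ∑ i, μ (T ∩ slab f r p q S (r i))
      = ∑ i, μ.restrict T (slab f r p q S (r i)) := by
        simp only [Measure.restrict_apply (hmeas _), Set.inter_comm T]
    _ ≤ μ.restrict T Set.univ :=
        sum_measure_le_measure_univ (fun i _ => (hmeas i).nullMeasurableSet)
          fun i _ j _ hij => (pairwise_disjoint_slab hpq S (hr.ne hij)).aedisjoint
    _ = μ T := Measure.restrict_apply_univ T

/-- In the language of cooperative games, `V` lies in the core of `S ↦ μ (∑ i ∈ S, A i)`. -/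
theorem exists_allocation_measure_sum [Fintype ι] [MeasurableAdd E] [μ.IsAddLeftInvariant]
    [IsOrderedCancelAddMonoid R] (hf : Measurable f) (hμ : ∀ y, μ (f ⁻¹' {y}) = 0)
    (hmin : ∀ i, ∃ x ∈ A i, IsMinOn f (A i) x) (hmax : ∀ i, ∃ x ∈ A i, IsMaxOn f (A i) x) :
    ∃ V : ι → ENNReal,
      (∀ S : Finset ι, μ (∑ i ∈ S, A i) ≤ ∑ i ∈ S, V i) ∧ ∑ i, V i ≤ μ (∑ i, A i) := by
  choose p hpA hp using hmin
  choose q hqA hq using hmax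
  obtain ⟨r, hr⟩ := Countable.exists_injective_nat ι
  refine ⟨fun i => μ ((∑ j, A j) ∩ slab f r p q Finset.univ (r i)), fun S => ?_,
    sum_measure_inter_slab_le hf hr (fun i => hp i (hqA i)) _ _⟩
  exact (measure_sum_le_sum_measure_inter_slab hμ hp hq r S).trans
    (Finset.sum_le_sum fun i hi => measure_sum_inter_slab_le hr hpA hqA hi)

theorem volume_fractionally_superadditive_general [Fintype ι] [DecidableEq ι] [MeasurableAdd E]
    [μ.IsAddLeftInvariant] [IsOrderedCancelAddMonoid R] (hf : Measurable f)
    (hμ : ∀ y, μ (f ⁻¹' {y}) = 0) (hmin : ∀ i, ∃ x ∈ A i, IsMinOn f (A i) x)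
    (hmax : ∀ i, ∃ x ∈ A i, IsMaxOn f (A i) x) (hfin : μ (∑ i, A i) ≠ ⊤)
    {𝒢 : Finset (Finset ι)} {β : Finset ι → ℝ} (hβ : ∀ S ∈ 𝒢, 0 ≤ β S)
    (hpack : ∀ i, ∑ S ∈ 𝒢 with i ∈ S, β S ≤ 1) :
    ∑ S ∈ 𝒢, β S * μ.real (∑ i ∈ S, A i) ≤ μ.real (∑ i, A i) := by
  obtain ⟨V, hcover, htotal⟩ := exists_allocation_measure_sum hf hμ hmin hmax
  have hVfin : ∀ i, V i ≠ ⊤ := fun i =>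
    ENNReal.sum_ne_top.1 (ne_top_of_le_ne_top hfin htotal) i (Finset.mem_univ i)
  have hsum : ∀ S : Finset ι, (∑ i ∈ S, V i).toReal = ∑ i ∈ S, (V i).toReal := fun _ =>
    ENNReal.toReal_sum fun i _ => hVfin i
  calc ∑ S ∈ 𝒢, β S * μ.real (∑ i ∈ S, A i)
      ≤ ∑ i, (V i).toReal := by
        refine sum_mul_le_sum_of_le_sum hβ hpack (fun _ => ENNReal.toReal_nonneg) fun S _ => ?_
        rw [← hsum]
        exact ENNReal.toReal_mono (ENNReal.sum_ne_top.2 fun i _ => hVfin i) (hcover S)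
    _ = (∑ i, V i).toReal := (hsum Finset.univ).symm
    _ ≤ μ.real (∑ i, A i) := ENNReal.toReal_mono hfin htotal

end Measure

lemma isCompact_finsetSum {ι E : Type*} [AddCommMonoid E] [TopologicalSpace E] [ContinuousAdd E]
    {A : ι → Set E} {S : Finset ι} (hA : ∀ i ∈ S, IsCompact (A i)) : IsCompact (∑ i ∈ S, A i) :=
  Finset.sum_induction A IsCompact (fun _ _ => IsCompact.add) isCompact_singleton hA

/-- Fractional superadditivity of volume with respect to Minkowski summation
on compact subsets of `ℝ^d` (Theorem `thm:FSA` / `th:Rd`). -/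
theorem volume_fractionally_superadditive
    (d M : ℕ) (hd : 1 ≤ d) (hM : 1 ≤ M)
    (A : Fin M → Set (Fin d → ℝ))
    (hne : ∀ i, (A i).Nonempty)
    (hcpt : ∀ i, IsCompact (A i))
    (𝒢 : Finset (Finset (Fin M)))
    (β : Finset (Fin M) → ℝ)
    (h𝒢 : ∀ S ∈ 𝒢, S.Nonempty)
    (hβ : ∀ S ∈ 𝒢, 0 ≤ β S)
    (hfrac : ∀ i : Fin M, ∑ S ∈ 𝒢.filter (fun S => i ∈ S), β S = 1) :
    ∑ S ∈ 𝒢, β S * (volume (∑ i ∈ S, A i)).toReal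
      ≤ (volume (∑ i : Fin M, A i)).toReal := by
  have hf : Continuous (Pi.evalAddMonoidHom (fun _ : Fin d => ℝ) ⟨0, hd⟩) := continuous_apply _
  exact volume_fractionally_superadditive_general hf.measurable
    (Measure.pi_hyperplane (α := fun _ : Fin d => ℝ) (fun _ => volume) ⟨0, hd⟩)
    (fun i => (hcpt i).exists_isMinOn (hne i) hf.continuousOn)
    (fun i => (hcpt i).exists_isMaxOn (hne i) hf.continuousOn)
    (isCompact_finsetSum fun i _ => hcpt i).measure_ne_top hβ (fun i => (hfrac i).le)
end

section
/- Let (𝒢, β) be a fractional partition of [M] and let A_1, …, A_M be nonempty compact subsets of ℝ. If every S ∈ 𝒢 with β_S > 0 is such that Σ_{i∈S} A_i is an interval (a convex subset of ℝ), then |A_1 + ⋯ + A_M| = Σ_{S∈𝒢} β_S · |Σ_{i∈S} A_i|. -/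
open Pointwise MeasureTheory

/-!
On nonempty subsets of `ℝ` the diameter is additive under Minkowski sums, and it bounds the Lebesgue
measure from above. Double counting with the fractional partition therefore reduces the claim to
`volume = ediam` for the sum over all indices, given that equality for the sums of positive weight.

Let `A j` have the largest diameter and let `T ∋ j` have positive weight. Since `ediam (A i) ≤
ediam (∑ k ∈ T, A k)` for every `i`, the remaining sets can be added to `∑ k ∈ T, A k` one at a
time: if `volume s = ediam s` and `y ≤ z` are points of `t` with `z - y ≤ ediam s`, then the
convex hulls of the translates `y + s` and `z + s` overlap or touch, so `(y + s) ∪ (z + s)` again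
has as much outer measure as its diameter. None of the sets has to be measurable, because outer
measure is additive when a set is cut along a half-line.
-/

theorem toReal_sum_ofReal_mul {ι : Type*} {s : Finset ι} {a : ι → ℝ} {b : ι → ENNReal}
    (ha : ∀ i ∈ s, 0 ≤ a i) (hb : ∀ i ∈ s, b i ≠ ⊤) :
    (∑ i ∈ s, ENNReal.ofReal (a i) * b i).toReal = ∑ i ∈ s, a i * (b i).toReal := by
  rw [ENNReal.toReal_sum fun i hi => ENNReal.mul_ne_top ENNReal.ofReal_ne_top (hb i hi)]
  exact Finset.sum_congr rfl fun i hi => ENNReal.toReal_ofReal_mul _ _ (ha i hi)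

section FinsetSum

variable {ι E : Type*} [AddCommMonoid E] {A : ι → Set E} {S : Finset ι}

theorem nonempty_finset_sum (hne : ∀ i ∈ S, (A i).Nonempty) : (∑ i ∈ S, A i).Nonempty :=
  Finset.sum_induction A Set.Nonempty (fun _ _ => Set.Nonempty.add) Set.zero_nonempty hne

theorem isCompact_finset_sum [TopologicalSpace E] [ContinuousAdd E]
    (hA : ∀ i ∈ S, IsCompact (A i)) : IsCompact (∑ i ∈ S, A i) :=
  Finset.sum_induction A IsCompact (fun _ _ => IsCompact.add) isCompact_singleton hA

end FinsetSum

section Diameter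

variable {s t : Set ℝ}

theorem ofReal_sub_le_ediam {x y : ℝ} (hx : x ∈ s) (hy : y ∈ s) :
    ENNReal.ofReal (y - x) ≤ Metric.ediam s := by
  refine le_trans ?_ (Metric.edist_le_ediam_of_mem hy hx)
  rw [edist_dist, Real.dist_eq]
  exact ENNReal.ofReal_le_ofReal (le_abs_self _)

theorem add_ediam_le (ht : t.Nonempty) {a c : ENNReal}
    (h : ∀ y ∈ t, ∀ z ∈ t, y ≤ z → a + ENNReal.ofReal (z - y) ≤ c) :
    a + Metric.ediam t ≤ c := by
  simp only [Metric.ediam, ENNReal.add_biSup ht, iSup_le_iff]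
  intro y hy z hz
  rw [edist_dist, Real.dist_eq]
  rcases le_total y z with hyz | hzy
  · rw [abs_sub_comm, abs_of_nonneg (sub_nonneg.2 hyz)]
    exact h y hy z hz hyz
  · rw [abs_of_nonneg (sub_nonneg.2 hzy)]
    exact h z hz y hy hzy

theorem ediam_add (hs : s.Nonempty) (ht : t.Nonempty) :
    Metric.ediam (s + t) = Metric.ediam s + Metric.ediam t := by
  refine (ediam_add_le s t).antisymm ?_
  refine add_ediam_le ht fun u hu v hv huv => ?_
  rw [add_comm]
  refine add_ediam_le hs fun x hx y hy hxy => ?_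
  calc ENNReal.ofReal (v - u) + ENNReal.ofReal (y - x)
      = ENNReal.ofReal ((y + v) - (x + u)) := by
        rw [← ENNReal.ofReal_add (sub_nonneg.2 huv) (sub_nonneg.2 hxy)]
        ring_nf
    _ ≤ Metric.ediam (s + t) :=
        ofReal_sub_le_ediam (Set.add_mem_add hx hu) (Set.add_mem_add hy hv)

theorem ediam_finset_sum {ι : Type*} {A : ι → Set ℝ} {S : Finset ι}
    (hne : ∀ i ∈ S, (A i).Nonempty) :
    Metric.ediam (∑ i ∈ S, A i) = ∑ i ∈ S, Metric.ediam (A i) := by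
  classical
  induction S using Finset.induction_on with
  | empty => simp
  | insert i S hi ih =>
    rw [Finset.forall_mem_insert] at hne
    rw [Finset.sum_insert hi, Finset.sum_insert hi,
      ediam_add hne.1 (nonempty_finset_sum hne.2), ih hne.2]

end Diameter

section FullMeasure

variable {s t : Set ℝ}

theorem volume_eq_ediam_of_ordConnected (hs : s.OrdConnected) :
    volume s = Metric.ediam s := by
  refine (Real.volume_le_diam s).antisymm ?_
  rcases s.eq_empty_or_nonempty with rfl | hne
  · simp
  · rw [← zero_add (Metric.ediam s)]
    refine add_ediam_le hne fun x hx y hy _ => ?_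
    rw [zero_add, ← Real.volume_Icc]
    exact measure_mono (hs.out hx hy)

theorem ofReal_le_volume_sdiff_Iic_sSup_sub (hs : volume s = Metric.ediam s)
    (hbdd : Bornology.IsBounded s) {d : ℝ} (hd : 0 ≤ d)
    (hds : ENNReal.ofReal d ≤ Metric.ediam s) :
    ENNReal.ofReal d ≤ volume (s \ Set.Iic (sSup s - d)) := by
  set a := sSup s - d - sInf s with ha
  have hediam : Metric.ediam s = ENNReal.ofReal (a + d) := by
    rw [Real.ediam_eq hbdd, ha]
    ring_nf
  have hlow : volume (s ∩ Set.Iic (sSup s - d)) ≤ ENNReal.ofReal a := by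
    rw [ha, ← Real.volume_Icc]
    exact measure_mono fun x hx => ⟨(hbdd.subset_Icc_sInf_sSup hx.1).1, hx.2⟩
  have ha_nonneg : 0 ≤ a := by
    have hle : sInf s ≤ sSup s := Real.sInf_le_sSup s hbdd.bddBelow hbdd.bddAbove
    rw [hediam, ENNReal.ofReal_le_ofReal_iff (by linarith)] at hds
    linarith
  refine (ENNReal.add_le_add_iff_left (ENNReal.ofReal_ne_top (r := a))).1 ?_
  calc ENNReal.ofReal a + ENNReal.ofReal d
      = volume s := by rw [hs, hediam, ENNReal.ofReal_add ha_nonneg hd]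
    _ = volume (s ∩ Set.Iic (sSup s - d)) + volume (s \ Set.Iic (sSup s - d)) :=
        (measure_inter_add_sdiff s measurableSet_Iic).symm
    _ ≤ ENNReal.ofReal a + volume (s \ Set.Iic (sSup s - d)) := by gcongr

theorem volume_add_ofReal_le_volume_union_vadd (hs : volume s = Metric.ediam s) {d : ℝ}
    (hd : 0 ≤ d) (hds : ENNReal.ofReal d ≤ Metric.ediam s) :
    volume s + ENNReal.ofReal d ≤ volume (s ∪ (d +ᵥ s)) := by
  by_cases hbdd : Bornology.IsBounded s
  · have hleft : s ⊆ (s ∪ (d +ᵥ s)) ∩ Set.Iic (sSup s) := fun x hx =>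
      ⟨Or.inl hx, (hbdd.subset_Icc_sInf_sSup hx).2⟩
    have hright : d +ᵥ (s \ Set.Iic (sSup s - d)) ⊆ (s ∪ (d +ᵥ s)) \ Set.Iic (sSup s) := by
      rintro _ ⟨x, ⟨hxs, hx⟩, rfl⟩
      exact ⟨Or.inr (Set.vadd_mem_vadd_set hxs),
        fun hle : d + x ≤ sSup s => hx (le_sub_iff_add_le'.2 hle)⟩
    calc volume s + ENNReal.ofReal d
        ≤ volume s + volume (d +ᵥ (s \ Set.Iic (sSup s - d))) := by
          rw [measure_vadd]
          gcongr
          exact ofReal_le_volume_sdiff_Iic_sSup_sub hs hbdd hd hds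
      _ ≤ volume ((s ∪ (d +ᵥ s)) ∩ Set.Iic (sSup s))
            + volume ((s ∪ (d +ᵥ s)) \ Set.Iic (sSup s)) :=
          add_le_add (measure_mono hleft) (measure_mono hright)
      _ = volume (s ∪ (d +ᵥ s)) := measure_inter_add_sdiff _ measurableSet_Iic
  · have htop : volume s = ⊤ := hs.trans (Metric.ediam_of_unbounded hbdd)
    rw [measure_mono_top Set.subset_union_left htop]
    exact le_top

theorem volume_add_eq_ediam (hs : volume s = Metric.ediam s) (hsne : s.Nonempty)
    (htne : t.Nonempty) (hts : Metric.ediam t ≤ Metric.ediam s) :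
    volume (s + t) = Metric.ediam (s + t) := by
  refine (Real.volume_le_diam _).antisymm ?_
  rw [ediam_add hsne htne, ← hs]
  refine add_ediam_le htne fun y hy z hz hyz => ?_
  have hd : ENNReal.ofReal (z - y) ≤ Metric.ediam s := (ofReal_sub_le_ediam hy hz).trans hts
  have hsub : y +ᵥ (s ∪ ((z - y) +ᵥ s)) ⊆ s + t := by
    rw [Set.vadd_set_union, vadd_vadd, add_sub_cancel, add_comm s t]
    exact Set.union_subset (Set.vadd_set_subset_add hy) (Set.vadd_set_subset_add hz)
  calc volume s + ENNReal.ofReal (z - y)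
      ≤ volume (s ∪ ((z - y) +ᵥ s)) :=
        volume_add_ofReal_le_volume_union_vadd hs (sub_nonneg.2 hyz) hd
    _ = volume (y +ᵥ (s ∪ ((z - y) +ᵥ s))) := (measure_vadd volume y _).symm
    _ ≤ volume (s + t) := measure_mono hsub

theorem volume_add_finset_sum_eq_ediam {ι : Type*} {A : ι → Set ℝ} {U : Finset ι}
    (hs : volume s = Metric.ediam s) (hsne : s.Nonempty) (hne : ∀ i ∈ U, (A i).Nonempty)
    (hA : ∀ i ∈ U, Metric.ediam (A i) ≤ Metric.ediam s) :
    volume (s + ∑ i ∈ U, A i) = Metric.ediam (s + ∑ i ∈ U, A i) := by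
  classical
  induction U using Finset.induction_on with
  | empty => simpa using hs
  | insert i U hi ih =>
    rw [Finset.forall_mem_insert] at hne hA
    have hUne := nonempty_finset_sum hne.2
    have hi_le : Metric.ediam (A i) ≤ Metric.ediam (s + ∑ j ∈ U, A j) := by
      rw [ediam_add hsne hUne]
      exact hA.1.trans le_self_add
    rw [Finset.sum_insert hi, add_comm (A i), ← add_assoc]
    exact volume_add_eq_ediam (ih hne.2 hA.2) (hsne.add hUne) hne.1 hi_le

end FullMeasure

theorem sum_mul_sum_eq_sum_of_fractional_partition {ι R : Type*} [Fintype ι] [DecidableEq ι]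
    [NonAssocSemiring R] {𝒢 : Finset (Finset ι)} {β : Finset ι → R}
    (hfrac : ∀ i, ∑ S ∈ 𝒢.filter (fun S => i ∈ S), β S = 1) (f : ι → R) :
    ∑ S ∈ 𝒢, β S * ∑ i ∈ S, f i = ∑ i, f i := by
  calc ∑ S ∈ 𝒢, β S * ∑ i ∈ S, f i
      = ∑ S ∈ 𝒢, ∑ i ∈ S, β S * f i := by simp only [Finset.mul_sum]
    _ = ∑ i, ∑ S ∈ 𝒢.filter (fun S => i ∈ S), β S * f i := Finset.sum_comm' (by simp)
    _ = ∑ i, f i := by simp only [← Finset.sum_mul, hfrac, one_mul]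

theorem volume_sum_eq_ediam_of_covering {ι : Type*} [Fintype ι] {A : ι → Set ℝ}
    (hne : ∀ i, (A i).Nonempty)
    (hcover : ∀ j, ∃ T : Finset ι,
      j ∈ T ∧ volume (∑ i ∈ T, A i) = Metric.ediam (∑ i ∈ T, A i)) :
    volume (∑ i, A i) = Metric.ediam (∑ i, A i) := by
  classical
  cases isEmpty_or_nonempty ι
  · rw [Finset.univ_eq_empty, Finset.sum_empty]
    exact volume_eq_ediam_of_ordConnected Set.ordConnected_singleton
  · obtain ⟨j, hj⟩ := Finite.exists_max fun i => Metric.ediam (A i)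
    obtain ⟨T, hjT, hT⟩ := hcover j
    have hle : ∀ i, Metric.ediam (A i) ≤ Metric.ediam (∑ k ∈ T, A k) := fun i => by
      rw [ediam_finset_sum fun i _ => hne i]
      exact (hj i).trans (Finset.single_le_sum_of_canonicallyOrdered
        (f := fun k => Metric.ediam (A k)) hjT)
    rw [← Finset.sum_sdiff (Finset.subset_univ T), add_comm]
    exact volume_add_finset_sum_eq_ediam hT (nonempty_finset_sum fun i _ => hne i)
      (fun i _ => hne i) fun i _ => hle i

theorem volume_fractional_superadditivity_eq_of_intervals_general
    {ι : Type*} [Fintype ι] [DecidableEq ι]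
    (A : ι → Set ℝ)
    (hne : ∀ i, (A i).Nonempty)
    (𝒢 : Finset (Finset ι))
    (β : Finset ι → ℝ)
    (hβ : ∀ S ∈ 𝒢, 0 ≤ β S)
    (hfrac : ∀ i, ∑ S ∈ 𝒢.filter (fun S => i ∈ S), β S = 1)
    (hfull : ∀ S ∈ 𝒢, 0 < β S → volume (∑ i ∈ S, A i) = Metric.ediam (∑ i ∈ S, A i)) :
    volume (∑ i, A i) = ∑ S ∈ 𝒢, ENNReal.ofReal (β S) * volume (∑ i ∈ S, A i) := by
  have hcover : ∀ j, ∃ T : Finset ι,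
      j ∈ T ∧ volume (∑ i ∈ T, A i) = Metric.ediam (∑ i ∈ T, A i) := fun j => by
    obtain ⟨T, hT, hβT⟩ := Finset.exists_ne_zero_of_sum_ne_zero ((hfrac j).trans_ne one_ne_zero)
    obtain ⟨hT𝒢, hjT⟩ := Finset.mem_filter.1 hT
    exact ⟨T, hjT, hfull T hT𝒢 ((hβ T hT𝒢).lt_of_ne' hβT)⟩
  have hfrac' : ∀ i, ∑ S ∈ 𝒢.filter (fun S => i ∈ S), ENNReal.ofReal (β S) = 1 := fun i => by
    rw [← ENNReal.ofReal_sum_of_nonneg fun S hS => hβ S (Finset.mem_of_mem_filter S hS),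
      hfrac, ENNReal.ofReal_one]
  rw [volume_sum_eq_ediam_of_covering hne hcover, ediam_finset_sum (fun i _ => hne i),
    ← sum_mul_sum_eq_sum_of_fractional_partition hfrac']
  refine Finset.sum_congr rfl fun S hS => ?_
  rcases (hβ S hS).eq_or_lt with hzero | hpos
  · simp [← hzero]
  · rw [hfull S hS hpos, ediam_finset_sum fun i _ => hne i]

/-- Equality case of fractional superadditivity in dimension 1: if every set of the
fractional partition with positive weight has a Minkowski subset sum which is an
interval (i.e. a convex subset of `ℝ`), then equality holds. -/
theorem volume_fractional_superadditivity_eq_of_intervals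
    (M : ℕ) (hM : 1 ≤ M)
    (A : Fin M → Set ℝ)
    (hne : ∀ i, (A i).Nonempty)
    (hcpt : ∀ i, IsCompact (A i))
    (𝒢 : Finset (Finset (Fin M)))
    (β : Finset (Fin M) → ℝ)
    (h𝒢 : ∀ S ∈ 𝒢, S.Nonempty)
    (hβ : ∀ S ∈ 𝒢, 0 ≤ β S)
    (hfrac : ∀ i : Fin M, ∑ S ∈ 𝒢.filter (fun S => i ∈ S), β S = 1)
    (hint : ∀ S ∈ 𝒢, 0 < β S → Convex ℝ (∑ i ∈ S, A i)) :
    (volume (∑ i : Fin M, A i)).toReal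
      = ∑ S ∈ 𝒢, β S * (volume (∑ i ∈ S, A i)).toReal := by
  rw [volume_fractional_superadditivity_eq_of_intervals_general A hne 𝒢 β hβ hfrac fun S hS hpos =>
    volume_eq_ediam_of_ordConnected (hint S hS hpos).ordConnected]
  exact toReal_sum_ofReal_mul hβ fun S _ =>
    (isCompact_finset_sum fun i _ => hcpt i).measure_ne_top
end

section
/- Let (𝒢, β) be a fractional partition of [M] and let A_1, …, A_M be nonempty finite subsets of ℤ. Then |A_1 + ⋯ + A_M| − 1 ≥ Σ_{S∈𝒢} β_S · (|Σ_{i∈S} A_i| − 1), where |·| denotes cardinality. -/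
open Pointwise

/-!
Start from the sum of the minima of the `A i` and replace minima by maxima, one index at a time.
Every subset sum `∑ i ∈ S, A i` is thereby swept from its least to its greatest element, and
replacing the index `j` sweeps a half-open layer of it, which is empty when `j ∉ S`.  When `j ∈ S`,
the indices outside `S` contribute the same element of `∑ i ∈ Sᶜ, A i` to both ends of the layer,
so translation by that element embeds the layer of `S` into the layer of the full sum.  For a fixed
`j` the weights of the `S` containing `j` add up to at most `1`, so the weighted layers of the
subset sums never outgrow the layer of the full sum.
-/

open Finset

section SumOfSets

variable {ι G : Type*} [AddCommMonoid G] [Preorder G] [IsOrderedAddMonoid G]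
  {A : ι → Set G} {m : ι → G} {S : Finset ι}

lemma isLeast_sum (hm : ∀ i ∈ S, IsLeast (A i) (m i)) :
    IsLeast (∑ i ∈ S, A i) (∑ i ∈ S, m i) := by
  refine ⟨Set.finsetSum_mem_finsetSum _ _ _ fun i hi => (hm i hi).1, fun x hx => ?_⟩
  obtain ⟨g, hg, rfl⟩ := (Set.mem_finsetSum _ _ _).1 hx
  exact sum_le_sum fun i hi => (hm i hi).2 (hg hi)

lemma isGreatest_sum (hm : ∀ i ∈ S, IsGreatest (A i) (m i)) :
    IsGreatest (∑ i ∈ S, A i) (∑ i ∈ S, m i) :=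
  isLeast_sum (G := Gᵒᵈ) hm

end SumOfSets

lemma card_filter_Ioc_le_card_filter_Ioc_add {G : Type*} [AddCommMonoid G] [PartialOrder G]
    [IsOrderedCancelAddMonoid G] [DecidableEq G] [DecidableLE G] [DecidableLT G]
    {X Y : Finset G} {y : G} (hy : y ∈ Y) (a b : G) :
    #{x ∈ X | a < x ∧ x ≤ b} ≤ #{x ∈ X + Y | a + y < x ∧ x ≤ b + y} := by
  refine card_le_card_of_injOn (· + y) (fun x hx => ?_) (add_left_injective y).injOn
  obtain ⟨hxX, hax, hxb⟩ := mem_filter.1 hx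
  exact mem_filter.2 ⟨add_mem_add hxX hy, add_lt_add_left hax y, add_le_add_left hxb y⟩

lemma sum_mul_le_of_sum_filter_mem_le_one {ι R : Type*} [DecidableEq ι] [Semiring R]
    [PartialOrder R] [IsOrderedRing R] {𝒢 : Finset (Finset ι)} {β f : Finset ι → R} {j : ι} {c : R}
    (hβ : ∀ S ∈ 𝒢, 0 ≤ β S) (hβj : ∑ S ∈ 𝒢 with j ∈ S, β S ≤ 1) (hc : 0 ≤ c)
    (hmem : ∀ S ∈ 𝒢, j ∈ S → f S ≤ c) (hnotMem : ∀ S ∈ 𝒢, j ∉ S → f S ≤ 0) :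
    ∑ S ∈ 𝒢, β S * f S ≤ c :=
  calc ∑ S ∈ 𝒢, β S * f S
      ≤ ∑ S ∈ 𝒢, if j ∈ S then β S * c else 0 := by
        refine sum_le_sum fun S hS => ?_
        split_ifs with hj
        · exact mul_le_mul_of_nonneg_left (hmem S hS hj) (hβ S hS)
        · exact mul_nonpos_of_nonneg_of_nonpos (hβ S hS) (hnotMem S hS hj)
    _ = (∑ S ∈ 𝒢 with j ∈ S, β S) * c := by rw [← sum_filter, sum_mul]
    _ ≤ c := mul_le_of_le_one_left hc hβj

section Corner

variable {ι G : Type*} [DecidableEq ι] [AddCommMonoid G] {lo hi : ι → G}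

/-- The point of the subset sum over `S` reached after the minima `lo i` have been replaced by the
maxima `hi i` at the indices `i ∈ T`. -/
def corner (lo hi : ι → G) (T S : Finset ι) : G := ∑ i ∈ S, T.piecewise hi lo i

lemma corner_mem_sum [DecidableEq G] {A : ι → Finset G} (hlo : ∀ i, lo i ∈ A i)
    (hhi : ∀ i, hi i ∈ A i) (T S : Finset ι) :
    corner lo hi T S ∈ ∑ i ∈ S, A i := by
  rw [← mem_coe, coe_sum]
  exact Set.finsetSum_mem_finsetSum _ _ _ fun i _ =>
    T.piecewise_cases hi lo (· ∈ A i) (hhi i) (hlo i)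

lemma corner_insert_of_notMem {j : ι} {S : Finset ι} (hj : j ∉ S) (T : Finset ι) :
    corner lo hi (insert j T) S = corner lo hi T S :=
  sum_congr rfl fun _ hiS => piecewise_insert_of_ne _ _ _ (ne_of_mem_of_not_mem hiS hj)

lemma corner_add_corner_compl [Fintype ι] (T S : Finset ι) :
    corner lo hi T S + corner lo hi T Sᶜ = corner lo hi T univ :=
  sum_add_sum_compl S _

lemma corner_le_corner_insert [PartialOrder G] [IsOrderedAddMonoid G] (h : lo ≤ hi)
    (T : Finset ι) (j : ι) (S : Finset ι) : corner lo hi T S ≤ corner lo hi (insert j T) S := by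
  refine sum_le_sum fun i _ => ?_
  rw [piecewise_insert]
  exact le_update_self_iff.2 (T.piecewise_le_of_le_of_le le_rfl h j) i

end Corner

section Layer

variable {ι G : Type*} [DecidableEq ι] [AddCommMonoid G] [LinearOrder G]
  {A : ι → Finset G} {lo hi : ι → G}

/-- The part of the subset sum over `S` swept once the maxima have been reached at the indices
in `T`. -/
def belowCorner (A : ι → Finset G) (lo hi : ι → G) (T S : Finset ι) : Finset G :=
  {x ∈ ∑ i ∈ S, A i | x ≤ corner lo hi T S}

/-- The part of the subset sum over `S` swept by passing to the maximum at the index `j`, the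
maxima having been reached at the indices in `T` before. -/
def layer (A : ι → Finset G) (lo hi : ι → G) (T : Finset ι) (j : ι) (S : Finset ι) : Finset G :=
  {x ∈ ∑ i ∈ S, A i | corner lo hi T S < x ∧ x ≤ corner lo hi (insert j T) S}

lemma card_belowCorner_empty [IsOrderedAddMonoid G]
    (hlo : ∀ i, IsLeast (A i : Set G) (lo i)) (S : Finset ι) :
    #(belowCorner A lo hi ∅ S) = 1 := by
  have hleast : IsLeast (↑(∑ i ∈ S, A i) : Set G) (∑ i ∈ S, lo i) := by
    rw [coe_sum]
    exact isLeast_sum fun i _ => hlo i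
  refine card_eq_one.2 ⟨∑ i ∈ S, lo i, ?_⟩
  ext x
  simp only [belowCorner, corner, piecewise_empty, mem_filter, mem_singleton]
  constructor
  · exact fun ⟨hmem, hle⟩ => hle.antisymm (hleast.2 hmem)
  · rintro rfl
    exact ⟨hleast.1, le_rfl⟩

lemma belowCorner_univ [Fintype ι] [IsOrderedAddMonoid G]
    (hhi : ∀ i, IsGreatest (A i : Set G) (hi i)) (S : Finset ι) :
    belowCorner A lo hi univ S = ∑ i ∈ S, A i := by
  have hgreatest : IsGreatest (↑(∑ i ∈ S, A i) : Set G) (∑ i ∈ S, hi i) := by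
    rw [coe_sum]
    exact isGreatest_sum fun i _ => hhi i
  refine filter_true_of_mem fun x hx => ?_
  simpa only [corner, piecewise_univ] using hgreatest.2 hx

lemma card_belowCorner_insert [IsOrderedAddMonoid G] (h : lo ≤ hi) (T : Finset ι) (j : ι)
    (S : Finset ι) :
    #(belowCorner A lo hi (insert j T) S)
      = #(belowCorner A lo hi T S) + #(layer A lo hi T j S) := by
  have hcorner := corner_le_corner_insert h T j S
  have hunion : belowCorner A lo hi (insert j T) S
      = belowCorner A lo hi T S ∪ layer A lo hi T j S := by
    ext x
    simp only [belowCorner, layer, mem_union, mem_filter]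
    grind
  have hdisjoint : Disjoint (belowCorner A lo hi T S) (layer A lo hi T j S) :=
    disjoint_filter.2 fun _ _ hle hlt => hlt.1.not_ge hle
  rw [hunion, card_union_of_disjoint hdisjoint]

lemma layer_eq_empty_of_notMem {j : ι} {S : Finset ι} (hj : j ∉ S) (T : Finset ι) :
    layer A lo hi T j S = ∅ := by
  rw [layer, corner_insert_of_notMem hj]
  exact filter_false_of_mem fun _ _ hx => hx.1.not_ge hx.2

lemma card_layer_le_card_layer_univ [Fintype ι] [IsOrderedCancelAddMonoid G]
    (hlo : ∀ i, lo i ∈ A i) (hhi : ∀ i, hi i ∈ A i) {j : ι} {S : Finset ι} (hj : j ∈ S)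
    (T : Finset ι) :
    #(layer A lo hi T j S) ≤ #(layer A lo hi T j univ) := by
  have hcompl : corner lo hi (insert j T) Sᶜ = corner lo hi T Sᶜ :=
    corner_insert_of_notMem (notMem_compl.2 hj) T
  rw [layer, layer, ← corner_add_corner_compl T S, ← corner_add_corner_compl (insert j T) S,
    hcompl, ← sum_add_sum_compl S A]
  exact card_filter_Ioc_le_card_filter_Ioc_add (corner_mem_sum hlo hhi T Sᶜ) _ _

theorem sum_mul_card_belowCorner_sub_one_le [Fintype ι] [IsOrderedCancelAddMonoid G]
    {R : Type*} [Ring R] [PartialOrder R] [IsOrderedRing R]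
    (hlo : ∀ i, IsLeast (A i : Set G) (lo i)) (hhi : ∀ i, IsGreatest (A i : Set G) (hi i))
    {𝒢 : Finset (Finset ι)} {β : Finset ι → R} (hβ : ∀ S ∈ 𝒢, 0 ≤ β S)
    (hpack : ∀ i, ∑ S ∈ 𝒢 with i ∈ S, β S ≤ 1) (T : Finset ι) :
    ∑ S ∈ 𝒢, β S * ((#(belowCorner A lo hi T S) : R) - 1)
      ≤ (#(belowCorner A lo hi T univ) : R) - 1 := by
  induction T using Finset.induction_on with
  | empty =>
    simp only [card_belowCorner_empty hlo, Nat.cast_one, sub_self, mul_zero, sum_const_zero,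
      le_refl]
  | insert j T _ ih =>
    have hlayer : ∑ S ∈ 𝒢, β S * (#(layer A lo hi T j S) : R) ≤ #(layer A lo hi T j univ) :=
      sum_mul_le_of_sum_filter_mem_le_one hβ (hpack j) (Nat.cast_nonneg _)
        (fun S _ hj => Nat.mono_cast <|
          card_layer_le_card_layer_univ (fun i => (hlo i).1) (fun i => (hhi i).1) hj T)
        (fun S _ hj => by rw [layer_eq_empty_of_notMem hj, card_empty, Nat.cast_zero])
    have hle : lo ≤ hi := fun i => (hlo i).2 (hhi i).1
    simp only [card_belowCorner_insert hle, Nat.cast_add, add_sub_right_comm, mul_add,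
      sum_add_distrib]
    exact add_le_add ih hlayer

end Layer

theorem card_sub_one_fractionally_superadditive_general {ι G R : Type*} [Fintype ι] [DecidableEq ι]
    [AddCommMonoid G] [LinearOrder G] [IsOrderedCancelAddMonoid G]
    [Ring R] [PartialOrder R] [IsOrderedRing R]
    (A : ι → Finset G) (hne : ∀ i, (A i).Nonempty)
    (𝒢 : Finset (Finset ι)) (β : Finset ι → R) (hβ : ∀ S ∈ 𝒢, 0 ≤ β S)
    (hpack : ∀ i, ∑ S ∈ 𝒢 with i ∈ S, β S ≤ 1) :
    ∑ S ∈ 𝒢, β S * ((#(∑ i ∈ S, A i) : R) - 1) ≤ (#(∑ i, A i) : R) - 1 := by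
  have hlo : ∀ i, IsLeast (A i : Set G) ((A i).min' (hne i)) := fun i => (A i).isLeast_min' _
  have hhi : ∀ i, IsGreatest (A i : Set G) ((A i).max' (hne i)) := fun i => (A i).isGreatest_max' _
  simpa only [belowCorner_univ hhi] using
    sum_mul_card_belowCorner_sub_one_le hlo hhi hβ hpack univ

/-- Theorem `th:Z`: fractional superadditivity of (cardinality minus one) for
Minkowski sums of finite subsets of the integers. -/
theorem card_sub_one_fractionally_superadditive
    (M : ℕ) (hM : 1 ≤ M)
    (A : Fin M → Finset ℤ)
    (hne : ∀ i, (A i).Nonempty)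
    (𝒢 : Finset (Finset (Fin M)))
    (β : Finset (Fin M) → ℝ)
    (h𝒢 : ∀ S ∈ 𝒢, S.Nonempty)
    (hβ : ∀ S ∈ 𝒢, 0 ≤ β S)
    (hfrac : ∀ i : Fin M, ∑ S ∈ 𝒢.filter (fun S => i ∈ S), β S = 1) :
    ∑ S ∈ 𝒢, β S * (((∑ i ∈ S, A i).card : ℝ) - 1)
      ≤ ((∑ i : Fin M, A i).card : ℝ) - 1 :=
  card_sub_one_fractionally_superadditive_general A hne 𝒢 β hβ fun i => (hfrac i).le
end

section
/- Let (𝒢, β) be a fractional partition of [M] and let A_1, …, A_M be nonempty finite subsets of ℤ. If there exists ρ ∈ ℕ such that for every S ∈ 𝒢 with β_S > 0 the sum set Σ_{i∈S} A_i is an arithmetic progression with common difference ρ (a set of the form {a, a+ρ, a+2ρ, …, a+(n−1)ρ}), then |A_1 + ⋯ + A_M| − 1 = Σ_{S∈𝒢} β_S · (|Σ_{i∈S} A_i| − 1). -/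
open Pointwise

/-!
For `ρ ≠ 0`, let `P i` be the shortest progression of difference `ρ` containing `A i`, with `n i`
steps. If `∑ i ∈ S, A i` is a progression, then it has the same end points as `∑ i ∈ S, P i`, hence
equals it, and so has `∑ i ∈ S, n i + 1` elements. This property passes from `S` and `T` to `S ∪ T`:
let `U`, `V`, `W` be the sums of the `A i` over `S ∩ T`, `S \ T`, `T \ S`. In `U + V + W`, the
property of `T` lets us replace `U` and `W` by the sums of the corresponding `P i`, and then that of
`S` lets us replace `V` too. So the full sum has the property as well, and the identity becomes a
double count of the `n i`.
-/

section Progression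

open Finset

/-- The arithmetic progression `a, a + ρ, …, a + n • ρ`; the parameter `n` counts the steps rather
than the terms, so that it is additive under Minkowski sums. -/
def arithProg {G : Type*} [AddMonoid G] [DecidableEq G] (ρ a : G) (n : ℕ) : Finset G :=
  (range (n + 1)).image fun t => a + t • ρ

section AddMonoid

variable {G : Type*} [AddMonoid G] [DecidableEq G] {ρ a x : G} {n : ℕ}

lemma mem_arithProg : x ∈ arithProg ρ a n ↔ ∃ t ≤ n, a + t • ρ = x := by
  simp [arithProg]

lemma arithProg_zero_steps (ρ a : G) : arithProg ρ a 0 = {a} := by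
  simp [arithProg]

lemma arithProg_zero_left (a : G) (n : ℕ) : arithProg 0 a n = {a} := by
  ext x
  simpa [mem_arithProg, eq_comm] using fun _ : a = x => ⟨0, n.zero_le⟩

end AddMonoid

section AddLeftCancelMonoid

variable {G : Type*} [AddLeftCancelMonoid G] [DecidableEq G] {ρ : G}

lemma card_arithProg (hρ : ¬IsOfFinAddOrder ρ) (a : G) (n : ℕ) :
    (arithProg ρ a n).card = n + 1 := by
  rw [arithProg, card_image_of_injective, card_range]
  exact (add_right_injective a).comp (injective_nsmul_iff_not_isOfFinAddOrder.2 hρ)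

lemma arithProg_eq_of_endpoints_mem (hρ : ¬IsOfFinAddOrder ρ) {a b : G} {m n : ℕ}
    (hleft : b ∈ arithProg ρ a m) (hright : b + n • ρ ∈ arithProg ρ a m)
    (hsub : arithProg ρ a m ⊆ arithProg ρ b n) : arithProg ρ a m = arithProg ρ b n := by
  refine hsub.antisymm fun x hx => ?_
  obtain ⟨s, -, rfl⟩ := mem_arithProg.1 hleft
  obtain ⟨t, ht, hst⟩ := mem_arithProg.1 hright
  obtain ⟨j, hj, rfl⟩ := mem_arithProg.1 hx
  have ht_eq : t = s + n := by
    apply injective_nsmul_iff_not_isOfFinAddOrder.2 hρ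
    simpa [add_assoc, ← add_nsmul] using hst
  exact mem_arithProg.2 ⟨s + j, by omega, by rw [add_nsmul, add_assoc]⟩

end AddLeftCancelMonoid

section AddCommMonoid

variable {G ι : Type*} [AddCommMonoid G] [DecidableEq G] {ρ a b c : G} {k m n : ℕ}

lemma arithProg_add_arithProg (ρ a b : G) (m n : ℕ) :
    arithProg ρ a m + arithProg ρ b n = arithProg ρ (a + b) (m + n) := by
  ext x
  simp only [mem_add, mem_arithProg]
  constructor
  · rintro ⟨_, ⟨s, hs, rfl⟩, _, ⟨t, ht, rfl⟩, rfl⟩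
    exact ⟨s + t, add_le_add hs ht, by rw [add_nsmul, add_add_add_comm]⟩
  · rintro ⟨t, ht, rfl⟩
    refine ⟨_, ⟨min t m, min_le_right t m, rfl⟩, _, ⟨t - min t m, by omega, rfl⟩, ?_⟩
    rw [add_add_add_comm, ← add_nsmul, Nat.add_sub_cancel' (min_le_left t m)]

lemma arithProg_add_eq_of_add_eq {U V : Finset G} (hU : U ⊆ arithProg ρ a m)
    (hV : V ⊆ arithProg ρ b n) (hUV : U + V = arithProg ρ (a + b) (m + n)) :
    arithProg ρ a m + V = arithProg ρ (a + b) (m + n) := by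
  apply Subset.antisymm
  · exact (add_subset_add_left hV).trans_eq (arithProg_add_arithProg ρ a b m n)
  · exact hUV.symm.trans_subset (add_subset_add_right hU)

lemma add_add_eq_arithProg {U V W : Finset G} (hU : U ⊆ arithProg ρ a m)
    (hV : V ⊆ arithProg ρ b n) (hUV : U + V = arithProg ρ (a + b) (m + n))
    (hUW : U + W = arithProg ρ (a + c) (m + k)) :
    U + V + W = arithProg ρ (a + b + c) (m + n + k) :=
  calc
    U + V + W = arithProg ρ a m + arithProg ρ c k + V := by
      rw [add_right_comm, hUW, arithProg_add_arithProg]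
    _ = arithProg ρ (a + b) (m + n) + arithProg ρ c k := by
      rw [add_right_comm, arithProg_add_eq_of_add_eq hU hV hUV]
    _ = arithProg ρ (a + b + c) (m + n + k) := arithProg_add_arithProg ..

variable {A : ι → Finset G} {a : ι → G} {n : ι → ℕ}

lemma sum_nonempty_of_forall_nonempty {S : Finset ι} (hA : ∀ i ∈ S, (A i).Nonempty) :
    (∑ i ∈ S, A i).Nonempty :=
  sum_induction A Finset.Nonempty (fun _ _ => Nonempty.add) zero_nonempty hA

lemma sum_subset_arithProg {S : Finset ι} (hA : ∀ i ∈ S, A i ⊆ arithProg ρ (a i) (n i)) :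
    ∑ i ∈ S, A i ⊆ arithProg ρ (∑ i ∈ S, a i) (∑ i ∈ S, n i) := by
  induction S using Finset.cons_induction with
  | empty => simp [arithProg_zero_steps, singleton_zero]
  | cons i S hi ih =>
    simp only [sum_cons, ← arithProg_add_arithProg]
    exact add_subset_add (hA i (mem_cons_self i S)) (ih fun j hj => hA j (mem_cons_of_mem hj))

variable [DecidableEq ι]

lemma sum_union_eq_arithProg {S T : Finset ι} (hA : ∀ i ∈ S, A i ⊆ arithProg ρ (a i) (n i))
    (hS : ∑ i ∈ S, A i = arithProg ρ (∑ i ∈ S, a i) (∑ i ∈ S, n i))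
    (hT : ∑ i ∈ T, A i = arithProg ρ (∑ i ∈ T, a i) (∑ i ∈ T, n i)) :
    ∑ i ∈ S ∪ T, A i = arithProg ρ (∑ i ∈ S ∪ T, a i) (∑ i ∈ S ∪ T, n i) := by
  rw [← union_sdiff_self_eq_union]
  simp only [sum_union disjoint_sdiff, ← sum_inter_add_sum_sdiff S T]
  simp only [← sum_inter_add_sum_sdiff S T] at hS
  simp only [← sum_inter_add_sum_sdiff T S, inter_comm T S] at hT
  exact add_add_eq_arithProg
    (sum_subset_arithProg fun i hi => hA i (mem_inter.1 hi).1)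
    (sum_subset_arithProg fun i hi => hA i (mem_sdiff.1 hi).1) hS hT

lemma sum_sup_eq_arithProg {𝓗 : Finset (Finset ι)} (hA : ∀ i, A i ⊆ arithProg ρ (a i) (n i))
    (h𝓗 : ∀ S ∈ 𝓗, ∑ i ∈ S, A i = arithProg ρ (∑ i ∈ S, a i) (∑ i ∈ S, n i)) :
    ∑ i ∈ 𝓗.sup id, A i = arithProg ρ (∑ i ∈ 𝓗.sup id, a i) (∑ i ∈ 𝓗.sup id, n i) :=
  sup_induction (p := fun S => ∑ i ∈ S, A i = arithProg ρ (∑ i ∈ S, a i) (∑ i ∈ S, n i))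
    (by simp [arithProg_zero_steps, singleton_zero])
    (fun _ hS _ hT => sum_union_eq_arithProg (fun i _ => hA i) hS hT) h𝓗

end AddCommMonoid

lemma sum_eq_arithProg_of_endpoints_mem {G ι : Type*} [AddCancelCommMonoid G] [DecidableEq G]
    {ρ : G} (hρ : ¬IsOfFinAddOrder ρ) {A : ι → Finset G} {S : Finset ι} {a : ι → G} {n : ι → ℕ}
    {x : G} {m : ℕ} (hleft : ∀ i ∈ S, a i ∈ A i)
    (hright : ∀ i ∈ S, a i + n i • ρ ∈ A i) (hA : ∀ i ∈ S, A i ⊆ arithProg ρ (a i) (n i))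
    (hS : ∑ i ∈ S, A i = arithProg ρ x m) :
    ∑ i ∈ S, A i = arithProg ρ (∑ i ∈ S, a i) (∑ i ∈ S, n i) := by
  have sum_mem_sum : ∀ f : ι → G, (∀ i ∈ S, f i ∈ A i) → ∑ i ∈ S, f i ∈ ∑ i ∈ S, A i :=
    fun f hf => by
      rw [← mem_coe, coe_sum]
      exact Set.finsetSum_mem_finsetSum S _ f hf
  have hsum_right : ∑ i ∈ S, a i + (∑ i ∈ S, n i) • ρ ∈ ∑ i ∈ S, A i := by
    rw [sum_smul, ← sum_add_distrib]
    exact sum_mem_sum _ hright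
  have hsub := sum_subset_arithProg hA
  rw [hS] at hsub hsum_right ⊢
  exact arithProg_eq_of_endpoints_mem hρ (hS ▸ sum_mem_sum a hleft) hsum_right hsub

section AddCommGroup

variable {G ι : Type*} [AddCommGroup G] [DecidableEq G] {ρ : G}

lemma sub_mem_zmultiples_of_mem_arithProg {a x y : G} {n : ℕ} (hx : x ∈ arithProg ρ a n)
    (hy : y ∈ arithProg ρ a n) : y - x ∈ AddSubgroup.zmultiples ρ := by
  obtain ⟨s, -, rfl⟩ := mem_arithProg.1 hx
  obtain ⟨t, -, rfl⟩ := mem_arithProg.1 hy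
  exact AddSubgroup.mem_zmultiples_iff.2 ⟨t - s, by simp [sub_smul]⟩

lemma exists_subset_arithProg {B : Finset G} (hB : B.Nonempty)
    (hsub : ∀ x ∈ B, ∀ y ∈ B, y - x ∈ AddSubgroup.zmultiples ρ) :
    ∃ (a : G) (n : ℕ), a ∈ B ∧ a + n • ρ ∈ B ∧ B ⊆ arithProg ρ a n := by
  obtain ⟨b, hb⟩ := hB
  choose! k hk using fun x hx => AddSubgroup.mem_zmultiples_iff.1 (hsub b hb x hx)
  obtain ⟨a, ha, hmin⟩ := exists_min_image B k ⟨b, hb⟩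
  obtain ⟨z, hz, hmax⟩ := exists_max_image B k ⟨b, hb⟩
  have eq_add_steps : ∀ x ∈ B, a + (k x - k a).toNat • ρ = x := fun x hx => by
    rw [← natCast_zsmul, Int.toNat_of_nonneg (sub_nonneg.2 (hmin x hx)), sub_zsmul, hk x hx,
      hk a ha]
    abel
  refine ⟨a, (k z - k a).toNat, ha, by rwa [eq_add_steps z hz], fun x hx => ?_⟩
  exact mem_arithProg.2 ⟨(k x - k a).toNat,
    Int.toNat_le_toNat (sub_le_sub_right (hmax x hx) (k a)), eq_add_steps x hx⟩

variable {A : ι → Finset G}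

lemma exists_subset_arithProg_of_sum_subset {S : Finset ι} {x : G} {m : ℕ}
    (hA : ∀ i ∈ S, (A i).Nonempty) (hS : ∑ i ∈ S, A i ⊆ arithProg ρ x m) {i : ι} (hi : i ∈ S) :
    ∃ (a : G) (n : ℕ), a ∈ A i ∧ a + n • ρ ∈ A i ∧ A i ⊆ arithProg ρ a n := by
  classical
  obtain ⟨c, hc⟩ : (∑ j ∈ S.erase i, A j).Nonempty :=
    sum_nonempty_of_forall_nonempty fun j hj => hA j (mem_of_mem_erase hj)
  have add_mem_arithProg : ∀ y ∈ A i, y + c ∈ arithProg ρ x m := fun y hy =>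
    hS (add_sum_erase S A hi ▸ add_mem_add hy hc)
  refine exists_subset_arithProg (hA i hi) fun y hy z hz => ?_
  simpa using
    sub_mem_zmultiples_of_mem_arithProg (add_mem_arithProg y hy) (add_mem_arithProg z hz)

lemma exists_card_sum_eq_sum_add_one [Fintype ι] [IsAddTorsionFree G]
    (hA : ∀ i, (A i).Nonempty) {𝓗 : Finset (Finset ι)} (hcover : ∀ i, ∃ S ∈ 𝓗, i ∈ S)
    (h𝓗 : ∀ S ∈ 𝓗, ∃ (x : G) (m : ℕ), ∑ i ∈ S, A i = arithProg ρ x m) :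
    ∃ n : ι → ℕ, (∀ S ∈ 𝓗, (∑ i ∈ S, A i).card = ∑ i ∈ S, n i + 1) ∧
      (∑ i, A i).card = ∑ i, n i + 1 := by
  classical
  have exists_hull : ∀ i, ∃ (a : G) (n : ℕ), a ∈ A i ∧ a + n • ρ ∈ A i ∧ A i ⊆ arithProg ρ a n := by
    intro i
    obtain ⟨S, hS, hi⟩ := hcover i
    obtain ⟨x, m, hx⟩ := h𝓗 S hS
    exact exists_subset_arithProg_of_sum_subset (fun j _ => hA j) hx.subset hi
  choose a n hleft hright hhull using exists_hull
  rcases eq_or_ne ρ 0 with rfl | hρ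
  · have card_sum : ∀ S : Finset ι, (∑ i ∈ S, A i).card = 1 := fun S => by
      have hsum_ne : (∑ i ∈ S, A i).Nonempty := sum_nonempty_of_forall_nonempty fun i _ => hA i
      have hsub := sum_subset_arithProg (S := S) fun i _ => hhull i
      rw [arithProg_zero_left] at hsub
      exact card_eq_one.2 ⟨_, hsum_ne.subset_singleton_iff.1 hsub⟩
    exact ⟨0, by simp [card_sum]⟩
  · have hρ' : ¬IsOfFinAddOrder ρ := not_isOfFinAddOrder_of_isAddTorsionFree hρ
    have hsat : ∀ S ∈ 𝓗, ∑ i ∈ S, A i = arithProg ρ (∑ i ∈ S, a i) (∑ i ∈ S, n i) := by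
      intro S hS
      obtain ⟨x, m, hx⟩ := h𝓗 S hS
      exact sum_eq_arithProg_of_endpoints_mem hρ' (fun i _ => hleft i) (fun i _ => hright i)
        (fun i _ => hhull i) hx
    have hsup : 𝓗.sup id = univ := eq_univ_of_forall fun i => by simpa [mem_sup] using hcover i
    have huniv := sum_sup_eq_arithProg hhull hsat
    rw [hsup] at huniv
    exact ⟨n, fun S hS => by rw [hsat S hS, card_arithProg hρ'],
      by rw [huniv, card_arithProg hρ']⟩

end AddCommGroup

end Progression

lemma sum_eq_sum_mul_sum_of_fractional_partition {ι R : Type*} [Fintype ι] [DecidableEq ι]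
    [NonAssocSemiring R] {𝒢 : Finset (Finset ι)} {β : Finset ι → R}
    (hfrac : ∀ i, ∑ S ∈ 𝒢.filter (fun S => i ∈ S), β S = 1) (f : ι → R) :
    ∑ i, f i = ∑ S ∈ 𝒢, β S * ∑ i ∈ S, f i :=
  calc
    ∑ i, f i = ∑ i, ∑ S ∈ 𝒢.filter (fun S => i ∈ S), β S * f i := by
      simp only [← Finset.sum_mul, hfrac, one_mul]
    _ = ∑ S ∈ 𝒢, ∑ i ∈ S, β S * f i := Finset.sum_comm' (by simp [and_comm])
    _ = ∑ S ∈ 𝒢, β S * ∑ i ∈ S, f i := by simp only [Finset.mul_sum]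

theorem card_sub_one_fractional_superadditivity_eq_general {ι G R : Type*} [Fintype ι]
    [DecidableEq ι] [AddCommGroup G] [IsAddTorsionFree G] [DecidableEq G] [Ring R]
    (A : ι → Finset G) (hne : ∀ i, (A i).Nonempty) (𝒢 : Finset (Finset ι)) (β : Finset ι → R)
    (hfrac : ∀ i, ∑ S ∈ 𝒢.filter (fun S => i ∈ S), β S = 1) (ρ : G)
    (hAP : ∀ S ∈ 𝒢, β S ≠ 0 → ∃ (x : G) (n : ℕ),
      ∑ i ∈ S, A i = (Finset.range n).image (fun t : ℕ => x + t • ρ)) :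
    ((∑ i, A i).card : R) - 1 = ∑ S ∈ 𝒢, β S * (((∑ i ∈ S, A i).card : R) - 1) := by
  classical
  nontriviality R
  have hcover : ∀ i, ∃ S ∈ 𝒢.filter (fun S => β S ≠ 0), i ∈ S := fun i => by
    obtain ⟨S, hS, hβS⟩ := Finset.exists_ne_zero_of_sum_ne_zero ((hfrac i).trans_ne one_ne_zero)
    rw [Finset.mem_filter] at hS
    exact ⟨S, Finset.mem_filter.2 ⟨hS.1, hβS⟩, hS.2⟩
  have hprog : ∀ S ∈ 𝒢.filter (fun S => β S ≠ 0), ∃ (x : G) (m : ℕ),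
      ∑ i ∈ S, A i = arithProg ρ x m := fun S hS => by
    obtain ⟨x, n, hx⟩ := hAP S (Finset.mem_filter.1 hS).1 (Finset.mem_filter.1 hS).2
    obtain _ | m := n
    · simpa [hx] using sum_nonempty_of_forall_nonempty (S := S) fun i _ => hne i
    · exact ⟨x, m, hx⟩
  obtain ⟨n, hcard, hcard_univ⟩ := exists_card_sum_eq_sum_add_one hne hcover hprog
  rw [hcard_univ, Nat.cast_add_one, add_sub_cancel_right, Nat.cast_sum,
    sum_eq_sum_mul_sum_of_fractional_partition hfrac]
  refine Finset.sum_congr rfl fun S hS => ?_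
  obtain hβS | hβS := eq_or_ne (β S) 0
  · simp [hβS]
  · simp [hcard S (Finset.mem_filter.2 ⟨hS, hβS⟩)]

/-- Equality case of Theorem `th:Z`: if there is `ρ ∈ ℕ` such that every set of the
fractional partition with positive weight has a Minkowski subset sum which is an
arithmetic progression of increment `ρ`, then equality holds. -/
theorem card_sub_one_fractional_superadditivity_eq
    (M : ℕ) (hM : 1 ≤ M)
    (A : Fin M → Finset ℤ)
    (hne : ∀ i, (A i).Nonempty)
    (𝒢 : Finset (Finset (Fin M)))
    (β : Finset (Fin M) → ℝ)
    (h𝒢 : ∀ S ∈ 𝒢, S.Nonempty)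
    (hβ : ∀ S ∈ 𝒢, 0 ≤ β S)
    (hfrac : ∀ i : Fin M, ∑ S ∈ 𝒢.filter (fun S => i ∈ S), β S = 1)
    (ρ : ℕ)
    (hAP : ∀ S ∈ 𝒢, 0 < β S → ∃ (x : ℤ) (n : ℕ),
      (∑ i ∈ S, A i) = (Finset.range n).image (fun t : ℕ => x + (t : ℤ) * (ρ : ℤ))) :
    ((∑ i : Fin M, A i).card : ℝ) - 1
      = ∑ S ∈ 𝒢, β S * (((∑ i ∈ S, A i).card : ℝ) - 1) :=
  card_sub_one_fractional_superadditivity_eq_general A hne 𝒢 β hfrac (ρ : ℤ) fun S hS hβS => by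
    simpa only [nsmul_eq_mul] using hAP S hS ((hβ S hS).lt_of_ne' hβS)
end

section
/- Let S_1, …, S_s be subsets of [M] such that every i ∈ [M] belongs to exactly q of them, and for i ∈ [M] let h_1(i) < h_2(i) < ⋯ < h_q(i) be the increasing enumeration of the indices j with i ∈ S_j. Let A_1, …, A_M be nonempty compact subsets of ℝ with min A_i = 0 and a_i := max A_i. Fix k ∈ {1,…,q} and for j ∈ {1,…,s} set T_j := (Σ_{i∈S_j} A_i + Σ_{i ∈ h_k^{-1}({1,…,j−1}) \ S_j} a_i) ∩ ( Σ_{i∈h_k^{-1}({1,…,j−1})} a_i , Σ_{i∈h_k^{-1}({1,…,j})} a_i ]. Then the sets T_1, …, T_s are pairwise disjoint, each T_j is contained in Σ_{i∈[M]} A_i, and consequently Σ_{j=1}^s |T_j| ≤ |Σ_{i∈[M]} A_i|. -/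
open Pointwise MeasureTheory

/-!
Each `T j` lies in its truncating window, and the windows are pairwise disjoint because `a ≥ 0`.
Each `T j` also lies in the full sumset: a summand whose index is outside `S j` is either fixed at
`a i ∈ A i` or absent, which amounts to choosing `0 ∈ A i`. The windows are measurable, so they cut
the full sumset into pieces whose total measure is at most that of the sumset.
-/

open Set
open scoped ENNReal Function

section Sumsets

variable {ι E : Type*} [AddCommMonoid E] {A : ι → Set E}

lemma sum_subset_sum_of_zero_mem {s t : Finset ι} (hst : s ⊆ t)
    (hzero : ∀ i ∈ t, i ∉ s → 0 ∈ A i) : ∑ i ∈ s, A i ⊆ ∑ i ∈ t, A i := by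
  classical
  have hrest : (0 : E) ∈ ∑ i ∈ t \ s, A i := by
    simpa only [Finset.sum_const_zero] using finsetSum_mem_finsetSum (t \ s) A (fun _ => 0)
      fun i hi => hzero i (Finset.mem_sdiff.1 hi).1 (Finset.mem_sdiff.1 hi).2
  calc ∑ i ∈ s, A i ⊆ ∑ i ∈ s, A i + ∑ i ∈ t \ s, A i := subset_add_left _ hrest
    _ = ∑ i ∈ t, A i := by rw [add_comm, Finset.sum_sdiff hst]

lemma sum_add_singleton_sum_sdiff_subset [DecidableEq ι] {a : ι → E} (s u : Finset ι)
    (ha : ∀ i ∈ u \ s, a i ∈ A i) :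
    ∑ i ∈ s, A i + {∑ i ∈ u \ s, a i} ⊆ ∑ i ∈ s ∪ u, A i := by
  have hsum : ∑ i ∈ u \ s, a i ∈ ∑ i ∈ u \ s, A i := finsetSum_mem_finsetSum _ _ _ ha
  calc ∑ i ∈ s, A i + {∑ i ∈ u \ s, a i}
      ⊆ ∑ i ∈ s, A i + ∑ i ∈ u \ s, A i := add_subset_add_left (singleton_subset_iff.2 hsum)
    _ = ∑ i ∈ s ∪ u, A i := by
      rw [← Finset.sum_union Finset.disjoint_sdiff, Finset.union_sdiff_self_eq_union]

lemma isCompact_sum [TopologicalSpace E] [ContinuousAdd E] (s : Finset ι)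
    (hA : ∀ i ∈ s, IsCompact (A i)) : IsCompact (∑ i ∈ s, A i) :=
  Finset.sum_induction A IsCompact (fun _ _ => IsCompact.add) isCompact_singleton hA

end Sumsets

section Measure

lemma tsum_measure_le_of_subset_inter {α κ : Type*} [MeasurableSpace α] (μ : Measure α)
    {B : Set α} {T W : κ → Set α} (hW : ∀ j, MeasurableSet (W j))
    (hdisj : Pairwise (Disjoint on W)) (hT : ∀ j, T j ⊆ W j ∩ B) :
    ∑' j, μ (T j) ≤ μ B :=
  calc ∑' j, μ (T j) ≤ ∑' j, μ.restrict B (W j) := by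
        refine ENNReal.tsum_le_tsum fun j => ?_
        rw [Measure.restrict_apply (hW j)]
        exact measure_mono (hT j)
    _ ≤ μ.restrict B univ :=
        tsum_measure_le_measure_univ (fun j => (hW j).nullMeasurableSet)
          fun _ _ hij => (hdisj hij).aedisjoint
    _ = μ B := Measure.restrict_apply_univ B

lemma sum_toReal_le_toReal_of_tsum_le {κ : Type*} [Fintype κ] {f : κ → ℝ≥0∞} {b : ℝ≥0∞}
    (hb : b ≠ ∞) (hf : ∑' j, f j ≤ b) : ∑ j, (f j).toReal ≤ b.toReal := by
  rw [← ENNReal.toReal_sum fun j _ => ne_top_of_le_ne_top hb ((ENNReal.le_tsum j).trans hf),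
    ← tsum_fintype (L := .unconditional κ)]
  exact ENNReal.toReal_mono hb hf

end Measure

section Decomposition

variable {ι κ E : Type*} [Fintype ι] [LinearOrder κ] [AddCommMonoid E]

/-- The half-open interval between the sum of the `a i` of level below `j` and the sum of those of
level at most `j`, for a level function `t`. With `t i = h i k` these are the intervals that
truncate the sets `T j` of the decomposition. -/
def levelWindow [Preorder E] (t : ι → κ) (a : ι → E) (j : κ) : Set E :=
  Ioc (∑ i with t i < j, a i) (∑ i with t i ≤ j, a i)

/-- The set `T j` of the decomposition: the subset sum of `A` over `S j`, translated by the sum of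
the `a i` with level below `j` and `i ∉ S j`, and truncated to the `j`-th window. The level `t i`
stands for `h_k(i)`. -/
def truncatedSubsetSum [DecidableEq ι] [Preorder E] (S : κ → Finset ι) (t : ι → κ)
    (A : ι → Set E) (a : ι → E) (j : κ) : Set E :=
  (∑ i ∈ S j, A i + {∑ i ∈ ({i | t i < j} : Finset ι) \ S j, a i}) ∩ levelWindow t a j

lemma pairwise_disjoint_levelWindow [PartialOrder E] [IsOrderedAddMonoid E] (t : ι → κ)
    {a : ι → E} (ha : ∀ i, 0 ≤ a i) :
    Pairwise (Disjoint on levelWindow t a) := by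
  refine (pairwise_disjoint_on _).2 fun j₁ j₂ hj => Ioc_disjoint_Ioc_of_le ?_
  exact Finset.sum_le_sum_of_subset_of_nonneg
    (Finset.monotone_filter_right _ fun _ _ hi => lt_of_le_of_lt hi hj) fun i _ _ => ha i

variable [DecidableEq ι] (S : κ → Finset ι) (t : ι → κ) {A : ι → Set E} {a : ι → E}

lemma truncatedSubsetSum_subset_sum [Preorder E] (hzero : ∀ i, 0 ∈ A i) (ha : ∀ i, a i ∈ A i)
    (j : κ) : truncatedSubsetSum S t A a j ⊆ ∑ i, A i :=
  inter_subset_left.trans <|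
    (sum_add_singleton_sum_sdiff_subset _ _ fun i _ => ha i).trans <|
      sum_subset_sum_of_zero_mem (Finset.subset_univ _) fun i _ _ => hzero i

theorem decomposition_lemma_general [LinearOrder E] [IsOrderedAddMonoid E] [TopologicalSpace E]
    [ClosedIicTopology E] [MeasurableSpace E] [OpensMeasurableSpace E] (μ : Measure E)
    (hzero : ∀ i, 0 ∈ A i) (ha : ∀ i, a i ∈ A i) (ha_nonneg : ∀ i, 0 ≤ a i) :
    Pairwise (Disjoint on truncatedSubsetSum S t A a) ∧
    (∀ j, truncatedSubsetSum S t A a j ⊆ ∑ i, A i) ∧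
    ∑' j, μ (truncatedSubsetSum S t A a j) ≤ μ (∑ i, A i) := by
  have hdisj := pairwise_disjoint_levelWindow t ha_nonneg
  have hsub := truncatedSubsetSum_subset_sum S t hzero ha
  exact ⟨hdisj.mono fun _ _ hW => hW.mono inter_subset_right inter_subset_right, hsub,
    tsum_measure_le_of_subset_inter μ (fun _ => measurableSet_Ioc) hdisj
      fun j => subset_inter inter_subset_right (hsub j)⟩

end Decomposition

/-- Lemma `lem:decomp`: the truncated translated subset sums `T j` are pairwise
disjoint subsets of the full Minkowski sum, so their total length is at most the
length of the full sum. -/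
theorem decomposition_lemma
    (M s q : ℕ) (hq : 0 < q)
    (S : Fin s → Finset (Fin M))
    (hcover : ∀ i : Fin M, (Finset.univ.filter (fun j => i ∈ S j)).card = q)
    (h : Fin M → Fin q → Fin s)
    (hmono : ∀ i, StrictMono (h i))
    (hmem : ∀ (i : Fin M) (j : Fin s), i ∈ S j ↔ ∃ k, h i k = j)
    (A : Fin M → Set ℝ)
    (hne : ∀ i, (A i).Nonempty)
    (hcpt : ∀ i, IsCompact (A i))
    (a : Fin M → ℝ)
    (hmin : ∀ i, IsLeast (A i) 0)
    (hmax : ∀ i, IsGreatest (A i) (a i))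
    (k : Fin q)
    (T : Fin s → Set ℝ)
    (hT : ∀ j : Fin s, T j =
      ((∑ i ∈ S j, A i) +
          ({∑ i ∈ (Finset.univ.filter (fun i => h i k < j)) \ S j, a i} : Set ℝ)) ∩
        Set.Ioc (∑ i ∈ Finset.univ.filter (fun i => h i k < j), a i)
          (∑ i ∈ Finset.univ.filter (fun i => h i k ≤ j), a i)) :
    (∀ j₁ j₂ : Fin s, j₁ ≠ j₂ → Disjoint (T j₁) (T j₂)) ∧
    (∀ j : Fin s, T j ⊆ ∑ i : Fin M, A i) ∧
    ∑ j : Fin s, (volume (T j)).toReal ≤ (volume (∑ i : Fin M, A i)).toReal := by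
  obtain rfl : T = truncatedSubsetSum S (h · k) A a := funext hT
  obtain ⟨hdisj, hsub, hvol⟩ := decomposition_lemma_general S (h · k) volume
    (fun i => (hmin i).1) (fun i => (hmax i).1) fun i => (hmin i).2 (hmax i).1
  exact ⟨fun _ _ hj => hdisj hj, hsub, sum_toReal_le_toReal_of_tsum_le
    (isCompact_sum _ fun i _ => hcpt i).measure_ne_top hvol⟩
end

section
/- Let f : 2^{[M]} → ℝ_+ be a set function. If f is fractionally superadditive — that is, whenever T ⊆ [M] and nonnegative numbers (β_S)_{S⊆[M]} satisfy 𝟙_T = Σ_{S⊆[M]} β_S 𝟙_S as vectors in ℝ^M, one has f(T) ≥ Σ_{S⊆[M]} β_S f(S) — then f admits a positively 1-homogeneous concave extension to ℝ_+^M: there exists F : [0,∞)^M → ℝ with F concave on [0,∞)^M, F(λx) = λF(x) for all λ ≥ 0 and x ∈ [0,∞)^M, and F(𝟙_S) = f(S) for every S ⊆ [M]. -/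
/-!
The points `(𝟙_S, f S)` generate a convex cone `K` in `ℝ^ι × ℝ`, and the extension is the upper
boundary of `K`, `F x = sup {t | (x, t) ∈ K}`: since `K` is closed under addition and nonnegative
scaling, `F` is superadditive and positively homogeneous, hence concave. Fractional
superadditivity says exactly that `f T` is the largest height of `K` above `𝟙_T`. The heights are
bounded above by weak duality: `f ∅ = 0`, so a large multiple of the sum of the coordinates
dominates `f` at every `𝟙_S`, hence the heights of `K` everywhere.
-/

open scoped Pointwise

section ConeEnvelope

variable {E : Type*} [AddCommMonoid E] [Module ℝ E] {K : PointedCone ℝ (E × ℝ)} {x y : E}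

/-- The set of heights at which a cone in `E × ℝ` meets the vertical line above `x`. -/
def coneFiber (K : PointedCone ℝ (E × ℝ)) (x : E) : Set ℝ :=
  {t | (x, t) ∈ K}

/-- The upper boundary of a cone in `E × ℝ`, as a function on `E`. It has the junk value `0` above
points whose fiber is empty or unbounded above. -/
noncomputable def coneEnvelope (K : PointedCone ℝ (E × ℝ)) (x : E) : ℝ :=
  sSup (coneFiber K x)

theorem add_mem_coneFiber {s t : ℝ} (hs : s ∈ coneFiber K x) (ht : t ∈ coneFiber K y) :
    s + t ∈ coneFiber K (x + y) :=
  K.add_mem hs ht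

theorem smul_mem_coneFiber {l t : ℝ} (hl : 0 ≤ l) (ht : t ∈ coneFiber K x) :
    l • t ∈ coneFiber K (l • x) :=
  K.smul_mem hl ht

theorem coneFiber_smul_nonempty {l : ℝ} (hl : 0 ≤ l) (hx : (coneFiber K x).Nonempty) :
    (coneFiber K (l • x)).Nonempty :=
  let ⟨t, ht⟩ := hx
  ⟨l • t, smul_mem_coneFiber hl ht⟩

theorem coneFiber_smul {l : ℝ} (hl : 0 < l) : coneFiber K (l • x) = l • coneFiber K x := by
  ext t
  have hscale : (l • x, t) = l • (x, l⁻¹ • t) := by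
    rw [Prod.smul_mk, smul_inv_smul₀ hl.ne']
  rw [Set.mem_smul_set_iff_inv_smul_mem₀ hl.ne']
  change (l • x, t) ∈ K ↔ (x, l⁻¹ • t) ∈ K
  rw [hscale, K.smul_mem_iff hl]

theorem coneEnvelope_smul_of_pos {l : ℝ} (hl : 0 < l) :
    coneEnvelope K (l • x) = l * coneEnvelope K x := by
  rw [coneEnvelope, coneFiber_smul hl, Real.sSup_smul_of_nonneg hl.le, smul_eq_mul, coneEnvelope]

theorem coneEnvelope_zero : coneEnvelope K 0 = 0 := by
  have h : coneEnvelope K ((2 : ℝ) • 0) = 2 * coneEnvelope K 0 :=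
    coneEnvelope_smul_of_pos two_pos
  rw [smul_zero] at h
  linarith

theorem coneEnvelope_smul {l : ℝ} (hl : 0 ≤ l) :
    coneEnvelope K (l • x) = l * coneEnvelope K x := by
  rcases hl.eq_or_lt with rfl | hl
  · rw [zero_smul, zero_mul, coneEnvelope_zero]
  · exact coneEnvelope_smul_of_pos hl

theorem coneEnvelope_add_le (hx : (coneFiber K x).Nonempty) (hy : (coneFiber K y).Nonempty)
    (hxy : BddAbove (coneFiber K (x + y))) :
    coneEnvelope K x + coneEnvelope K y ≤ coneEnvelope K (x + y) := by
  refine le_sub_iff_add_le.1 (csSup_le hx fun s hs ↦ ?_)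
  refine le_sub_comm.1 (csSup_le hy fun t ht ↦ ?_)
  exact le_sub_iff_add_le'.2 (le_csSup hxy (add_mem_coneFiber hs ht))

theorem concaveOn_coneEnvelope (hK : ∀ x, BddAbove (coneFiber K x)) :
    ConcaveOn ℝ {x | (coneFiber K x).Nonempty} (coneEnvelope K) := by
  refine ⟨fun x hx y hy a b ha hb _ ↦ ?_, fun x hx y hy a b ha hb _ ↦ ?_⟩
  · obtain ⟨s, hs⟩ := hx
    obtain ⟨t, ht⟩ := hy
    exact ⟨_, add_mem_coneFiber (smul_mem_coneFiber ha hs) (smul_mem_coneFiber hb ht)⟩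
  · have hax : (coneFiber K (a • x)).Nonempty := coneFiber_smul_nonempty ha hx
    have hby : (coneFiber K (b • y)).Nonempty := coneFiber_smul_nonempty hb hy
    calc a • coneEnvelope K x + b • coneEnvelope K y
        = coneEnvelope K (a • x) + coneEnvelope K (b • y) := by
          rw [coneEnvelope_smul ha, coneEnvelope_smul hb, smul_eq_mul, smul_eq_mul]
      _ ≤ coneEnvelope K (a • x + b • y) := coneEnvelope_add_le hax hby (hK _)

theorem snd_le_of_mem_hull {G : Set (E × ℝ)} {φ : E →ₗ[ℝ] ℝ} (hφ : ∀ p ∈ G, p.2 ≤ φ p.1)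
    {p : E × ℝ} (hp : p ∈ PointedCone.hull ℝ G) : p.2 ≤ φ p.1 := by
  induction hp using Submodule.span_induction with
  | mem p hp => exact hφ p hp
  | zero => simp
  | add p q _ _ hp hq => simpa using add_le_add hp hq
  | smul c p _ hp => simpa [← Nonneg.coe_smul] using mul_le_mul_of_nonneg_left hp c.2

theorem bddAbove_coneFiber_hull {G : Set (E × ℝ)} {φ : E →ₗ[ℝ] ℝ} (hφ : ∀ p ∈ G, p.2 ≤ φ p.1)
    (x : E) : BddAbove (coneFiber (PointedCone.hull ℝ G) x) :=
  ⟨φ x, fun _ ht ↦ snd_le_of_mem_hull hφ ht⟩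

end ConeEnvelope

section SetFunction

variable {ι : Type*} [DecidableEq ι]

/-- The indicator vector `𝟙_S ∈ {0,1}^ι` of a finite set `S`. -/
def indicatorVec (S : Finset ι) : ι → ℝ :=
  fun i ↦ if i ∈ S then 1 else 0

/-- The cone in `ℝ^ι × ℝ` generated by the graph `{(𝟙_S, f S)}` of a set function `f`. -/
def graphCone (f : Finset ι → ℝ) : PointedCone ℝ ((ι → ℝ) × ℝ) :=
  PointedCone.hull ℝ (Set.range fun S ↦ (indicatorVec S, f S))

theorem mem_coneFiber_graphCone_indicatorVec (f : Finset ι → ℝ) (S : Finset ι) :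
    f S ∈ coneFiber (graphCone f) (indicatorVec S) :=
  Submodule.subset_span ⟨S, rfl⟩

theorem sum_smul_indicatorVec_singleton [Fintype ι] (x : ι → ℝ) :
    ∑ i, x i • indicatorVec {i} = x := by
  ext j
  simp [indicatorVec]

theorem coneFiber_graphCone_nonempty [Finite ι] (f : Finset ι → ℝ) {x : ι → ℝ} (hx : 0 ≤ x) :
    (coneFiber (graphCone f) x).Nonempty := by
  cases nonempty_fintype ι
  have hmem : ∑ i, x i • (indicatorVec {i}, f {i}) ∈ graphCone f :=
    sum_mem fun i _ ↦ (graphCone f).smul_mem (hx i) (mem_coneFiber_graphCone_indicatorVec f {i})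
  have hsum : ∑ i, x i • (indicatorVec {i}, f {i}) = (x, ∑ i, x i * f {i}) := by
    ext1 <;> simp [Prod.fst_sum, Prod.snd_sum, sum_smul_indicatorVec_singleton]
  exact ⟨_, hsum ▸ hmem⟩

theorem exists_linearMap_ge_of_empty_nonpos [Finite ι] {f : Finset ι → ℝ} (hf : f ∅ ≤ 0) :
    ∃ φ : (ι → ℝ) →ₗ[ℝ] ℝ, ∀ S, f S ≤ φ (indicatorVec S) := by
  cases nonempty_fintype ι
  obtain ⟨C, hC⟩ := Finite.bddAbove_range fun S ↦ |f S|
  have habs : ∀ S, |f S| ≤ C := Set.forall_mem_range.1 hC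
  have hC_nonneg : 0 ≤ C := (abs_nonneg _).trans (habs ∅)
  refine ⟨C • ∑ i, LinearMap.proj i, fun S ↦ ?_⟩
  have hφ : (C • ∑ i, LinearMap.proj i : (ι → ℝ) →ₗ[ℝ] ℝ) (indicatorVec S) = C * S.card := by
    simp [indicatorVec]
  rw [hφ]
  rcases S.eq_empty_or_nonempty with rfl | hS
  · simpa using hf
  · calc f S ≤ C := (le_abs_self _).trans (habs S)
      _ ≤ C * S.card := le_mul_of_one_le_right hC_nonneg (mod_cast hS.card_pos)

variable [Fintype ι] {f : Finset ι → ℝ}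

/-- Fractional superadditivity of a set function: `∑ β_S f(S) ≤ f(T)` whenever the nonnegative
weights `β` satisfy `𝟙_T = ∑ β_S 𝟙_S`. -/
def IsFractionallySuperadditive (f : Finset ι → ℝ) : Prop :=
  ∀ (T : Finset ι) (β : Finset ι → ℝ), 0 ≤ β →
    indicatorVec T = ∑ S, β S • indicatorVec S → ∑ S, β S * f S ≤ f T

theorem exists_weights_of_mem_coneFiber_graphCone {x : ι → ℝ} {t : ℝ}
    (ht : t ∈ coneFiber (graphCone f) x) :
    ∃ β : Finset ι → ℝ, 0 ≤ β ∧ x = ∑ S, β S • indicatorVec S ∧ t = ∑ S, β S * f S := by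
  obtain ⟨β, hβ⟩ := (Submodule.mem_span_range_iff_exists_fun _).1 ht
  refine ⟨fun S ↦ β S, fun S ↦ (β S).2, ?_, ?_⟩
  · simpa [Prod.fst_sum] using (congrArg Prod.fst hβ).symm
  · simpa [Prod.snd_sum, ← Nonneg.coe_smul] using (congrArg Prod.snd hβ).symm

namespace IsFractionallySuperadditive

theorem map_empty (hf : IsFractionallySuperadditive f) : f ∅ = 0 := by
  have hscale : ∀ c : ℝ, 0 ≤ c → c * f ∅ ≤ f ∅ := fun c hc ↦ by
    let β : Finset ι → ℝ := Pi.single ∅ c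
    have hweights : indicatorVec ∅ = ∑ S, β S • indicatorVec S := by
      simp [β, Pi.single_apply, indicatorVec, funext_iff]
    simpa [β, Pi.single_apply] using hf ∅ β (Pi.single_nonneg.2 hc) hweights
  linarith [hscale 0 le_rfl, hscale 2 two_pos.le]

theorem bddAbove_coneFiber_graphCone (hf : IsFractionallySuperadditive f) (x : ι → ℝ) :
    BddAbove (coneFiber (graphCone f) x) := by
  obtain ⟨φ, hφ⟩ := exists_linearMap_ge_of_empty_nonpos hf.map_empty.le
  exact bddAbove_coneFiber_hull (φ := φ) (Set.forall_mem_range.2 hφ) x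

theorem isGreatest_coneFiber_graphCone (hf : IsFractionallySuperadditive f) (T : Finset ι) :
    IsGreatest (coneFiber (graphCone f) (indicatorVec T)) (f T) := by
  refine ⟨mem_coneFiber_graphCone_indicatorVec f T, fun t ht ↦ ?_⟩
  obtain ⟨β, hβ, hT, rfl⟩ := exists_weights_of_mem_coneFiber_graphCone ht
  exact hf T β hβ hT

theorem concaveOn_coneEnvelope_graphCone (hf : IsFractionallySuperadditive f) :
    ConcaveOn ℝ (Set.Ici 0) (coneEnvelope (graphCone f)) :=
  (concaveOn_coneEnvelope hf.bddAbove_coneFiber_graphCone).subset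
    (fun _ ↦ coneFiber_graphCone_nonempty f) (convex_Ici 0)

end IsFractionallySuperadditive

theorem concave_extension_of_fractionally_superadditive_general
    (hf : IsFractionallySuperadditive f) :
    ∃ F : (ι → ℝ) → ℝ,
      ConcaveOn ℝ (Set.Ici 0) F ∧
      (∀ l : ℝ, 0 ≤ l → ∀ x, 0 ≤ x → F (l • x) = l * F x) ∧
      ∀ S, F (indicatorVec S) = f S :=
  ⟨coneEnvelope (graphCone f), hf.concaveOn_coneEnvelope_graphCone,
    fun _ hl _ _ ↦ coneEnvelope_smul hl, fun S ↦ (hf.isGreatest_coneFiber_graphCone S).csSup_eq⟩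

end SetFunction

/-- Proposition `prop:extend`, direction `1 ⟹ 2`: a nonnegative fractionally
superadditive set function on `2^[M]` admits a positively 1-homogeneous concave
extension to the nonnegative orthant `ℝ₊^M`. -/
theorem concave_extension_of_fractionally_superadditive
    (M : ℕ) (hM : 1 ≤ M)
    (f : Finset (Fin M) → ℝ)
    (hf : ∀ S, 0 ≤ f S)
    (hFSA : ∀ (T : Finset (Fin M)) (β : Finset (Fin M) → ℝ),
      (∀ S, 0 ≤ β S) →
      (∀ i : Fin M, (if i ∈ T then (1 : ℝ) else 0)
        = ∑ S : Finset (Fin M), β S * (if i ∈ S then 1 else 0)) →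
      ∑ S : Finset (Fin M), β S * f S ≤ f T) :
    ∃ F : (Fin M → ℝ) → ℝ,
      ConcaveOn ℝ {x : Fin M → ℝ | ∀ i, 0 ≤ x i} F ∧
      (∀ (l : ℝ), 0 ≤ l → ∀ x : Fin M → ℝ, (∀ i, 0 ≤ x i) →
        F (l • x) = l * F x) ∧
      (∀ S : Finset (Fin M), F (fun i => if i ∈ S then 1 else 0) = f S) :=
  concave_extension_of_fractionally_superadditive_general fun T β hβ hT ↦
    hFSA T β hβ fun i ↦ by simpa [indicatorVec] using congrFun hT i
end

section
/- Fix d ≥ 1 and nonnegative reals a, b, c. There exist nonempty compact subsets A, B of ℝ^d with |A| = a, |B| = b and |A + B| = c if and only if c ≥ (a^{1/d} + b^{1/d})^d. -/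
open Pointwise MeasureTheory
open scoped ENNReal NNReal

/-!
Necessity is the Brunn–Minkowski inequality, deduced from the Prékopa–Leindler inequality. On `ℝ`
the latter comes from applying `|S| + |T| ≤ |S + T|` to the level sets of two functions with the
same supremum; tensorization then gives all dimensions.

For sufficiency, `d`-th powers of subsets of `ℝ` reduce the problem to `d = 1`. There, with
`b ≤ a`, adding the point `c - a` to `[0, b]` makes the sum with `[0, a]` equal to `[0, c]` as long
as `c ≤ 2a`. For larger `c`, adjoin to both intervals a scaled Cantor set `K`: it is null, but
`K + K = [0, c]`.
-/

lemma iInter_add_iInter_of_antitone {G : Type*} [TopologicalSpace G] [T2Space G] [AddGroup G]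
    [IsTopologicalAddGroup G] {K L : ℕ → Set G} (hK : Antitone K) (hL : Antitone L)
    (hKc : ∀ n, IsCompact (K n)) (hLc : ∀ n, IsCompact (L n)) :
    (⋂ n, K n) + ⋂ n, L n = ⋂ n, (K n + L n) := by
  refine (Set.subset_iInter fun n => Set.add_subset_add (Set.iInter_subset K n)
    (Set.iInter_subset L n)).antisymm fun x hx => ?_
  have hclosed (n) : IsClosed (K n ∩ (fun y => -y + x) ⁻¹' L n) :=
    (hKc n).isClosed.inter ((hLc n).isClosed.preimage (by fun_prop))
  have hnonempty (n) : (K n ∩ (fun y => -y + x) ⁻¹' L n).Nonempty := by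
    obtain ⟨y, hy, z, hz, hyz⟩ := Set.mem_iInter.1 hx n
    exact ⟨y, hy, by simpa [← hyz] using hz⟩
  obtain ⟨y, hy⟩ := IsCompact.nonempty_iInter_of_sequence_nonempty_isCompact_isClosed _
    (fun n => Set.inter_subset_inter (hK n.le_succ) (Set.preimage_mono (hL n.le_succ)))
    hnonempty ((hKc 0).of_isClosed_subset (hclosed 0) Set.inter_subset_left) hclosed
  rw [Set.mem_iInter] at hy
  exact ⟨y, Set.mem_iInter.2 fun n => (hy n).1, -y + x, Set.mem_iInter.2 fun n => (hy n).2,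
    add_neg_cancel_left y x⟩

lemma preCantorSet_add_preCantorSet (n : ℕ) :
    preCantorSet n + preCantorSet n = Set.Icc 0 2 := by
  refine (Set.add_subset_add preCantorSet_subset_unitInterval
    preCantorSet_subset_unitInterval).trans (Set.Icc_add_Icc_subset _ _ _ _) |>.trans_eq
    (by norm_num) |>.antisymm ?_
  induction n with
  | zero =>
    rintro x ⟨h0, h2⟩
    exact ⟨x / 2, ⟨by linarith, by linarith⟩, x / 2, ⟨by linarith, by linarith⟩, by ring⟩
  | succ n ih =>
    rintro x ⟨h0, h2⟩
    rcases le_total x (2 / 3) with h | h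
    · obtain ⟨y, hy, z, hz, hyz⟩ := @ih (3 * x) ⟨by linarith, by linarith⟩
      exact ⟨y / 3, Or.inl ⟨y, hy, rfl⟩, z / 3, Or.inl ⟨z, hz, rfl⟩, by grind⟩
    rcases le_total x (4 / 3) with h' | h'
    · obtain ⟨y, hy, z, hz, hyz⟩ := @ih (3 * x - 2) ⟨by linarith, by linarith⟩
      exact ⟨y / 3, Or.inl ⟨y, hy, rfl⟩, (2 + z) / 3, Or.inr ⟨z, hz, rfl⟩, by grind⟩
    · obtain ⟨y, hy, z, hz, hyz⟩ := @ih (3 * x - 4) ⟨by linarith, by linarith⟩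
      exact ⟨(2 + y) / 3, Or.inr ⟨y, hy, rfl⟩, (2 + z) / 3, Or.inr ⟨z, hz, rfl⟩, by grind⟩

lemma cantorSet_add_cantorSet : cantorSet + cantorSet = Set.Icc 0 2 := by
  have hcompact (n : ℕ) : IsCompact (preCantorSet n) :=
    isCompact_Icc.of_isClosed_subset (isClosed_preCantorSet n) preCantorSet_subset_unitInterval
  simp only [cantorSet, iInter_add_iInter_of_antitone preCantorSet_antitone preCantorSet_antitone
    hcompact hcompact, preCantorSet_add_preCantorSet, Set.iInter_const]

lemma volume_cantorSet : volume cantorSet = 0 := by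
  have hthird : (· / 3) '' cantorSet = (3⁻¹ : ℝ) • cantorSet := by
    simp only [div_eq_inv_mul, ← smul_eq_mul, Set.image_smul]
  have hright : (fun x => (2 + x) / 3) '' cantorSet = (2 / 3 : ℝ) +ᵥ (3⁻¹ : ℝ) • cantorSet := by
    simp only [← Set.image_smul, ← Set.image_vadd, Set.image_image, smul_eq_mul, vadd_eq_add,
      mul_add, div_eq_inv_mul]
  have hle : volume.real cantorSet ≤ 3⁻¹ * volume.real cantorSet + 3⁻¹ * volume.real cantorSet :=
    calc volume.real cantorSet
        = volume.real ((3⁻¹ : ℝ) • cantorSet ∪ ((2 / 3 : ℝ) +ᵥ (3⁻¹ : ℝ) • cantorSet)) := by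
          conv_lhs => rw [cantorSet_eq_union_halves, hthird, hright]
      _ ≤ _ := measureReal_union_le _ _
      _ = _ := by simp [measureReal_def, measure_vadd, Measure.addHaar_smul]
  refine (measureReal_eq_zero_iff isCompact_cantorSet.measure_lt_top.ne).1 ?_
  linarith [measureReal_nonneg (μ := volume) (s := cantorSet)]

lemma univ_pi_add_univ_pi {ι : Type*} {M : ι → Type*} [∀ i, Add (M i)] (s t : ∀ i, Set (M i)) :
    Set.univ.pi s + Set.univ.pi t = Set.univ.pi fun i => s i + t i := by
  ext x
  constructor
  · rintro ⟨y, hy, z, hz, rfl⟩ i -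
    exact Set.add_mem_add (hy i trivial) (hz i trivial)
  · intro hx
    choose y hy z hz hyz using fun i => hx i trivial
    exact ⟨y, fun i _ => hy i, z, fun i _ => hz i, funext hyz⟩

lemma exists_null_add_self_eq_Icc {c : ℝ} (hc : 0 ≤ c) :
    ∃ K ⊆ Set.Icc 0 (c / 2), IsCompact K ∧ volume K = 0 ∧ K + K = Set.Icc 0 c := by
  have hc2 : 0 ≤ c / 2 := by positivity
  have hscale {x : ℝ} (hx : 0 ≤ x) : (c / 2) • Set.Icc 0 x = Set.Icc 0 (c / 2 * x) := by
    simpa [← Set.image_smul] using Set.image_mul_left_Icc hc2 hx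
  refine ⟨(c / 2) • cantorSet, ?_, isCompact_cantorSet.smul _, ?_, ?_⟩
  · simpa [hscale zero_le_one] using Set.smul_set_mono (a := c / 2) cantorSet_subset_unitInterval
  · rw [Measure.addHaar_smul, volume_cantorSet, mul_zero]
  · rw [← smul_add, cantorSet_add_cantorSet, hscale zero_le_two, div_mul_cancel₀ c two_ne_zero]

lemma exists_isCompact_volume_add {a b c : ℝ} (ha : 0 ≤ a) (hb : 0 ≤ b) (hc : a + b ≤ c) :
    ∃ A B : Set ℝ, A.Nonempty ∧ B.Nonempty ∧ IsCompact A ∧ IsCompact B ∧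
      volume A = ENNReal.ofReal a ∧ volume B = ENNReal.ofReal b ∧
      volume (A + B) = ENNReal.ofReal c := by
  wlog hba : b ≤ a generalizing a b
  · obtain ⟨B, A, hB₀, hA₀, hBc, hAc, hB, hA, hBA⟩ :=
      this hb ha (by rwa [add_comm]) (le_of_not_ge hba)
    exact ⟨A, B, hA₀, hB₀, hAc, hBc, hA, hB, by rwa [add_comm]⟩
  have hunion {x : ℝ} {K : Set ℝ} (hK : volume K = 0) :
      volume (Set.Icc 0 x ∪ K) = ENNReal.ofReal x := by
    simpa using measure_congr (union_ae_eq_left_of_ae_eq_empty (s := Set.Icc 0 x)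
      (ae_eq_empty.2 hK))
  suffices ∃ K L : Set ℝ, IsCompact K ∧ IsCompact L ∧ volume K = 0 ∧ volume L = 0 ∧
      (Set.Icc 0 a ∪ K) + (Set.Icc 0 b ∪ L) = Set.Icc 0 c by
    obtain ⟨K, L, hKc, hLc, hK, hL, hKL⟩ := this
    exact ⟨_, _, (Set.nonempty_Icc.2 ha).inl, (Set.nonempty_Icc.2 hb).inl, isCompact_Icc.union hKc,
      isCompact_Icc.union hLc, hunion hK, hunion hL, by rw [hKL, Real.volume_Icc, sub_zero]⟩
  rcases le_total c (2 * a) with hca | hca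
  · refine ⟨∅, {c - a}, isCompact_empty, isCompact_singleton, measure_empty,
      Real.volume_singleton, ?_⟩
    rw [Set.union_empty, Set.add_union, Set.Icc_add_Icc ha hb, Set.add_singleton,
      Set.image_add_const_Icc, add_zero, zero_add, add_sub_cancel,
      Set.Icc_union_Icc' (by linarith) (by linarith), min_eq_left (by linarith), max_eq_right hc]
  · obtain ⟨K, hKsub, hKc, hK, hKK⟩ := exists_null_add_self_eq_Icc (c := c) (by linarith)
    have hsub {x : ℝ} (hx : x ≤ c / 2) : Set.Icc 0 x ∪ K ⊆ Set.Icc 0 (c / 2) :=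
      Set.union_subset (Set.Icc_subset_Icc_right hx) hKsub
    refine ⟨K, K, hKc, hKc, hK, hK, Set.Subset.antisymm ?_ ?_⟩
    · calc (Set.Icc 0 a ∪ K) + (Set.Icc 0 b ∪ K)
          ⊆ Set.Icc 0 (c / 2) + Set.Icc 0 (c / 2) :=
            Set.add_subset_add (hsub (by linarith)) (hsub (by linarith))
        _ ⊆ Set.Icc 0 c := by simpa using Set.Icc_add_Icc_subset 0 (c / 2) 0 (c / 2)
    · exact hKK ▸ Set.add_subset_add Set.subset_union_right Set.subset_union_right

lemma exists_isCompact_volume_add_pi {ι : Type*} [Fintype ι] {a b c : ℝ} (ha : 0 ≤ a) (hb : 0 ≤ b)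
    (hc : a + b ≤ c) : ∃ A B : Set (ι → ℝ), A.Nonempty ∧ B.Nonempty ∧ IsCompact A ∧ IsCompact B ∧
      volume.real A = a ^ Fintype.card ι ∧ volume.real B = b ^ Fintype.card ι ∧
      volume.real (A + B) = c ^ Fintype.card ι := by
  obtain ⟨A, B, hA₀, hB₀, hAc, hBc, hA, hB, hAB⟩ := exists_isCompact_volume_add ha hb hc
  have hpow {S : Set ℝ} {x : ℝ} (hx : 0 ≤ x) (hS : volume S = ENNReal.ofReal x) :
      volume.real (Set.univ.pi fun _ : ι => S) = x ^ Fintype.card ι := by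
    simp [measureReal_def, volume_pi_pi, hS, hx]
  refine ⟨Set.univ.pi fun _ => A, Set.univ.pi fun _ => B, Set.univ_pi_nonempty_iff.2 fun _ => hA₀,
    Set.univ_pi_nonempty_iff.2 fun _ => hB₀, isCompact_univ_pi fun _ => hAc,
    isCompact_univ_pi fun _ => hBc, hpow ha hA, hpow hb hB, ?_⟩
  rw [univ_pi_add_univ_pi, hpow (by linarith) hAB]

lemma volume_add_volume_le_of_isCompact {S T : Set ℝ} (hS : IsCompact S) (hT : IsCompact T)
    (hS₀ : S.Nonempty) (hT₀ : T.Nonempty) : volume S + volume T ≤ volume (S + T) := by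
  obtain ⟨m, hm, hmax⟩ := hS.exists_isGreatest hS₀
  obtain ⟨n, hn, hmin⟩ := hT.exists_isLeast hT₀
  have hdisj : AEDisjoint volume (n +ᵥ S) (m +ᵥ T) := by
    refine measure_mono_null (t := {m + n}) ?_ Real.volume_singleton
    rintro _ ⟨⟨x, hx, rfl⟩, ⟨y, hy, hxy⟩⟩
    simp only [vadd_eq_add, Set.mem_singleton_iff] at hxy ⊢
    linarith [hmax hx, hmin hy]
  calc volume S + volume T
      = volume ((n +ᵥ S) ∪ (m +ᵥ T)) := by
        rw [measure_union₀ (hT.vadd m).measurableSet.nullMeasurableSet hdisj, measure_vadd,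
          measure_vadd]
    _ ≤ volume (S + T) := by
        refine measure_mono (Set.union_subset ?_ (Set.vadd_set_subset_add hm))
        rw [add_comm]
        exact Set.vadd_set_subset_add hn

lemma measure_le_measure_add_left {G : Type*} [AddGroup G] [MeasurableSpace G] (μ : Measure G)
    [μ.IsAddLeftInvariant] [MeasurableAdd G] {S : Set G} (hS : S.Nonempty) (T : Set G) :
    μ T ≤ μ (S + T) := by
  obtain ⟨x, hx⟩ := hS
  calc μ T = μ (x +ᵥ T) := (measure_vadd μ x T).symm
    _ ≤ μ (S + T) := measure_mono (Set.vadd_set_subset_add hx)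

lemma volume_add_volume_le_volume_add {S T : Set ℝ} (hS : MeasurableSet S) (hT : MeasurableSet T)
    (hS₀ : S.Nonempty) (hT₀ : T.Nonempty) : volume S + volume T ≤ volume (S + T) := by
  rcases eq_or_ne (volume S) 0 with hS0 | hS0
  · simpa [hS0] using measure_le_measure_add_left volume hS₀ T
  rcases eq_or_ne (volume T) 0 with hT0 | hT0
  · simpa [hT0, add_comm] using measure_le_measure_add_left volume hT₀ S
  refine le_of_forall_lt fun r hr => ?_
  obtain ⟨u, hu, v, hv, huv⟩ := ENNReal.exists_lt_add_of_lt_add hr hS0 hT0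
  obtain ⟨K, hKS, hK, huK⟩ := hS.exists_lt_isCompact hu
  obtain ⟨L, hLT, hL, hvL⟩ := hT.exists_lt_isCompact hv
  calc r < u + v := huv
    _ ≤ volume K + volume L := add_le_add huK.le hvL.le
    _ ≤ volume (K + L) := volume_add_volume_le_of_isCompact hK hL
        (nonempty_of_measure_ne_zero (pos_of_gt huK).ne')
        (nonempty_of_measure_ne_zero (pos_of_gt hvL).ne')
    _ ≤ volume (S + T) := measure_mono (Set.add_subset_add hKS hLT)

lemma lintegral_eq_lintegral_meas_ofReal_lt {α : Type*} [MeasurableSpace α] {μ : Measure α}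
    [SFinite μ] {f : α → ℝ≥0∞} (hf : Measurable f) :
    ∫⁻ x, f x ∂μ = ∫⁻ r in Set.Ioi (0 : ℝ), μ {x | ENNReal.ofReal r < f x} := by
  have hset : MeasurableSet {z : α × ℝ | ENNReal.ofReal z.2 < f z.1} :=
    measurableSet_lt (by fun_prop) (by fun_prop)
  have hvol (a : ℝ≥0∞) : volume.restrict (Set.Ioi (0 : ℝ)) {r | ENNReal.ofReal r < a} = a := by
    rw [Measure.restrict_apply (measurableSet_lt (by fun_prop) (by fun_prop))]
    induction a with
    | top => simp
    | coe a =>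
      have : {r | ENNReal.ofReal r < a} ∩ Set.Ioi 0 = Set.Ioo 0 (a : ℝ) := by
        ext r
        simp only [Set.mem_inter_iff, Set.mem_ofPred_eq, Set.mem_Ioi, Set.mem_Ioo,
          and_comm (b := 0 < r)]
        refine and_congr_right fun hr => ?_
        rw [← ENNReal.ofReal_coe_nnreal, ENNReal.ofReal_lt_ofReal_iff_of_nonneg hr.le]
      simp [this]
  calc ∫⁻ x, f x ∂μ
      = (μ.prod (volume.restrict (Set.Ioi (0 : ℝ)))) {z | ENNReal.ofReal z.2 < f z.1} := by
        simp [Measure.prod_apply hset, hvol]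
    _ = _ := by simp [Measure.prod_apply_symm hset]

lemma rpow_mul_rpow_le_weighted_add {p q : ℝ≥0} (hp : 0 < p) (hq : 0 < q) (hpq : p + q = 1)
    (x y : ℝ≥0∞) : x ^ (p : ℝ) * y ^ (q : ℝ) ≤ p * x + q * y := by
  induction x with
  | top => simp [hp.ne']
  | coe x =>
    induction y with
    | top => simp [hq.ne']
    | coe y =>
      rw [← ENNReal.coe_rpow_of_nonneg _ p.coe_nonneg, ← ENNReal.coe_rpow_of_nonneg _ q.coe_nonneg]
      exact_mod_cast NNReal.geom_mean_le_arith_mean2_weighted p q x y hpq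

lemma lintegral_eq_iSup_lintegral_min_natCast {α : Type*} [MeasurableSpace α] {μ : Measure α}
    {f : α → ℝ≥0∞} (hf : Measurable f) : ∫⁻ x, f x ∂μ = ⨆ n : ℕ, ∫⁻ x, min (f x) n ∂μ := by
  rw [← lintegral_iSup (fun n => hf.min measurable_const)
    fun m n hmn x => min_le_min_left _ (Nat.cast_le.2 hmn)]
  simp [← inf_iSup_eq, ENNReal.iSup_natCast]

-- Since the suprema agree, the level sets of `f` and `g` at a given height are either both nonempty
-- or both empty, so the one-dimensional Brunn–Minkowski inequality applies at every height.
lemma weighted_add_lintegral_le_of_iSup_eq {p q : ℝ≥0} (hp : 0 < p) (hq : 0 < q) (hpq : p + q = 1)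
    {f g h : ℝ → ℝ≥0∞} (hf : Measurable f) (hg : Measurable g) (hh : Measurable h)
    (hsup : ⨆ x, f x = ⨆ x, g x)
    (hfgh : ∀ x y, f x ^ (p : ℝ) * g y ^ (q : ℝ) ≤ h (p • x + q • y)) :
    p * (∫⁻ x, f x) + q * (∫⁻ x, g x) ≤ ∫⁻ x, h x := by
  have hmeas {k : ℝ → ℝ≥0∞} : Measurable fun r => volume {x | ENNReal.ofReal r < k x} :=
    Antitone.measurable fun r s hrs => measure_mono fun x hx =>
      (ENNReal.ofReal_le_ofReal hrs).trans_lt hx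
  simp only [lintegral_eq_lintegral_meas_ofReal_lt, hf, hg, hh]
  rw [← lintegral_const_mul _ hmeas, ← lintegral_const_mul _ hmeas,
    ← lintegral_add_left (hmeas.const_mul _)]
  refine lintegral_mono fun r => ?_
  set t := ENNReal.ofReal r
  rcases lt_or_ge t (⨆ x, f x) with ht | ht
  · have hfne : {x | t < f x}.Nonempty := lt_iSup_iff.1 ht
    have hgne : {x | t < g x}.Nonempty := lt_iSup_iff.1 (ht.trans_eq hsup)
    have hscale (w : ℝ≥0) (S : Set ℝ) : w * volume S = volume (w • S) := by
      simp [Measure.addHaar_nnreal_smul]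
    have hlevel {k : ℝ → ℝ≥0∞} (hk : Measurable k) (w : ℝ≥0) :
        MeasurableSet (w • {x | t < k x}) :=
      (measurableSet_lt measurable_const hk).const_smul₀ w
    rw [hscale, hscale]
    refine (volume_add_volume_le_volume_add (hlevel hf p) (hlevel hg q) hfne.smul_set
      hgne.smul_set).trans (measure_mono ?_)
    rintro _ ⟨_, ⟨x, hx, rfl⟩, _, ⟨y, hy, rfl⟩, rfl⟩
    calc t = t ^ (p : ℝ) * t ^ (q : ℝ) := by
          rw [← ENNReal.rpow_add_of_nonneg _ _ p.coe_nonneg q.coe_nonneg, ← NNReal.coe_add, hpq,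
            NNReal.coe_one, ENNReal.rpow_one]
      _ < f x ^ (p : ℝ) * g y ^ (q : ℝ) :=
          ENNReal.mul_lt_mul (ENNReal.rpow_lt_rpow hx hp) (ENNReal.rpow_lt_rpow hy hq)
      _ ≤ _ := hfgh x y
  · have hempty {k : ℝ → ℝ≥0∞} (hk : ⨆ x, k x ≤ t) : {x | t < k x} = ∅ :=
      Set.eq_empty_of_forall_notMem fun x hx => hx.not_ge ((le_iSup k x).trans hk)
    simp [hempty ht, hempty (hsup.ge.trans ht)]

/-- The Prékopa–Leindler inequality for `μ`: whenever `h` dominates the weighted geometric means of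
`f` and `g` along the corresponding convex combinations, the same holds for their integrals. As a
property of the measure it passes to products and to linear images. The weights lie in `ℝ≥0`, so
that the same `p` and `q` serve as scalars acting on `E` and as exponents on `ℝ≥0∞`. -/
def IsPrekopaLeindler {E : Type*} [AddCommMonoid E] [Module ℝ≥0 E] [MeasurableSpace E]
    (μ : Measure E) : Prop :=
  ∀ ⦃p q : ℝ≥0⦄, 0 < p → 0 < q → p + q = 1 → ∀ ⦃f g h : E → ℝ≥0∞⦄, Measurable f → Measurable g →
    Measurable h → (∀ x y, f x ^ (p : ℝ) * g y ^ (q : ℝ) ≤ h (p • x + q • y)) →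
    (∫⁻ x, f x ∂μ) ^ (p : ℝ) * (∫⁻ x, g x ∂μ) ^ (q : ℝ) ≤ ∫⁻ x, h x ∂μ

namespace IsPrekopaLeindler

section

variable {E F : Type*} [AddCommMonoid E] [Module ℝ≥0 E] [MeasurableSpace E]
  [AddCommMonoid F] [Module ℝ≥0 F] [MeasurableSpace F] {μ : Measure E} {ν : Measure F}

lemma dirac (x₀ : E) : IsPrekopaLeindler (Measure.dirac x₀) := by
  intro p q _ _ hpq f g h hf hg hh hfgh
  simpa only [lintegral_dirac' x₀, hf, hg, hh, ← add_smul, hpq, one_smul] using hfgh x₀ x₀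

lemma of_measurePreserving (hμ : IsPrekopaLeindler μ) {e : E → F} (he : MeasurePreserving e μ ν)
    (hlin : IsLinearMap ℝ≥0 e) : IsPrekopaLeindler ν := by
  intro p q hp hq hpq f g h hf hg hh hfgh
  simp only [← he.lintegral_comp, hf, hg, hh]
  refine hμ hp hq hpq (hf.comp he.measurable) (hg.comp he.measurable) (hh.comp he.measurable)
    fun x y => ?_
  simpa only [Function.comp_apply, hlin.map_add, hlin.map_smul] using hfgh (e x) (e y)

lemma prod [SFinite ν] (hμ : IsPrekopaLeindler μ) (hν : IsPrekopaLeindler ν) :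
    IsPrekopaLeindler (μ.prod ν) := by
  intro p q hp hq hpq f g h hf hg hh hfgh
  simp only [lintegral_prod _ hf.aemeasurable, lintegral_prod _ hg.aemeasurable,
    lintegral_prod _ hh.aemeasurable]
  exact hμ hp hq hpq hf.lintegral_prod_right' hg.lintegral_prod_right' hh.lintegral_prod_right'
    fun x₁ x₂ => hν hp hq hpq (by fun_prop) (by fun_prop) (by fun_prop)
      fun y₁ y₂ => hfgh (x₁, y₁) (x₂, y₂)

lemma measure_rpow_mul_le (hμ : IsPrekopaLeindler μ) {p q : ℝ≥0} (hp : 0 < p) (hq : 0 < q)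
    (hpq : p + q = 1) {A B : Set E} (hA : MeasurableSet A) (hB : MeasurableSet B) :
    μ A ^ (p : ℝ) * μ B ^ (q : ℝ) ≤ μ (p • A + q • B) := by
  -- `p • A + q • B` need not be measurable, so `h` is the indicator of a measurable hull.
  have hC := measurableSet_toMeasurable μ (p • A + q • B)
  have := hμ hp hq hpq (measurable_one.indicator hA) (measurable_one.indicator hB)
    (measurable_one.indicator hC) fun x y => ?_
  · simpa [lintegral_indicator_one, hA, hB, hC] using this
  by_cases hx : x ∈ A
  · by_cases hy : y ∈ B
    · have hxy : p • x + q • y ∈ toMeasurable μ (p • A + q • B) :=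
        subset_toMeasurable _ _ (Set.add_mem_add (Set.smul_mem_smul_set hx)
          (Set.smul_mem_smul_set hy))
      simp [hx, hy, hxy]
    · simp [hy, hq]
  · simp [hx, hp]

end

lemma volume_real : IsPrekopaLeindler (volume : Measure ℝ) := by
  intro p q hp hq hpq f g h hf hg hh hfgh
  wlog hbdd : (⨆ x, f x) ≠ ⊤ ∧ (⨆ x, g x) ≠ ⊤ generalizing f g
  · have hiSup {w : ℝ≥0} (hw : 0 < w) (u : ℕ → ℝ≥0∞) :
        (⨆ n, u n) ^ (w : ℝ) = ⨆ n, u n ^ (w : ℝ) :=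
      (ENNReal.orderIsoRpow w (by positivity)).map_iSup u
    have hmin (k : ℝ → ℝ≥0∞) (n : ℕ) : ⨆ x, min (k x) n ≠ ⊤ :=
      ne_top_of_le_ne_top (ENNReal.natCast_ne_top n) (iSup_le fun x => min_le_right _ _)
    rw [lintegral_eq_iSup_lintegral_min_natCast hf, lintegral_eq_iSup_lintegral_min_natCast hg,
      hiSup hp, hiSup hq]
    simp only [ENNReal.iSup_mul, ENNReal.mul_iSup, iSup_le_iff]
    intro n m
    refine this (hf.min measurable_const) (hg.min measurable_const) (fun x y => ?_)
      ⟨hmin f _, hmin g _⟩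
    exact le_trans (by gcongr <;> exact min_le_left _ _) (hfgh x y)
  rcases eq_or_ne (⨆ x, f x) 0 with hf0 | hf0
  · simp [ENNReal.iSup_eq_zero.1 hf0, hp]
  rcases eq_or_ne (⨆ x, g x) 0 with hg0 | hg0
  · simp [ENNReal.iSup_eq_zero.1 hg0, hq]
  obtain ⟨hf_top, hg_top⟩ := hbdd
  set c := (⨆ x, g x) / ⨆ x, f x with hc
  have hc0 : c ^ (p : ℝ) ≠ 0 := by simp [hc, hg0, hf_top]
  have hctop : c ^ (p : ℝ) ≠ ⊤ := by simp [hc, hf0, hg_top, ENNReal.div_eq_top]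
  have hsup : ⨆ x, c * f x = ⨆ x, g x := by
    rw [← ENNReal.mul_iSup, ENNReal.div_mul_cancel hf0 hf_top]
  refine (ENNReal.mul_le_mul_iff_right hc0 hctop).1 ?_
  calc c ^ (p : ℝ) * ((∫⁻ x, f x) ^ (p : ℝ) * (∫⁻ x, g x) ^ (q : ℝ))
      = (∫⁻ x, c * f x) ^ (p : ℝ) * (∫⁻ x, g x) ^ (q : ℝ) := by
        rw [lintegral_const_mul c hf, ENNReal.mul_rpow_of_nonneg _ _ p.coe_nonneg, mul_assoc]
    _ ≤ p * (∫⁻ x, c * f x) + q * (∫⁻ x, g x) := rpow_mul_rpow_le_weighted_add hp hq hpq _ _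
    _ ≤ ∫⁻ x, c ^ (p : ℝ) * h x :=
        weighted_add_lintegral_le_of_iSup_eq hp hq hpq (hf.const_mul c) hg (hh.const_mul _) hsup
          fun x y => by
            rw [ENNReal.mul_rpow_of_nonneg _ _ p.coe_nonneg, mul_assoc]
            gcongr
            exact hfgh x y
    _ = c ^ (p : ℝ) * ∫⁻ x, h x := lintegral_const_mul _ hh

lemma volume_pi (d : ℕ) : IsPrekopaLeindler (volume : Measure (Fin d → ℝ)) := by
  induction d with
  | zero => simpa only [Measure.volume_pi_eq_dirac 0] using dirac 0
  | succ d ih =>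
    exact (volume_real.prod ih).of_measurePreserving
      (volume_preserving_piFinSuccAbove (fun _ => ℝ) 0).symm
      ⟨fun x y => by ext i; refine Fin.cases ?_ (fun _ => ?_) i <;> simp,
       fun x y => by ext i; refine Fin.cases ?_ (fun _ => ?_) i <;> simp⟩

section

variable {E : Type*} [NormedAddCommGroup E] [NormedSpace ℝ E] [FiniteDimensional ℝ E]
  [MeasurableSpace E] [BorelSpace E] {μ : Measure E} [μ.IsAddHaarMeasure] {A B : Set E}

-- `α` and `β` play the role of the `n`-th roots of the measures: rescaling `A` by `α⁻¹` and `B` by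
-- `β⁻¹` makes both measures at least one, and `(α + β)⁻¹ • (A + B)` is a convex combination of the
-- rescaled sets.
theorem brunn_minkowski_pow (hμ : IsPrekopaLeindler μ) (hA : MeasurableSet A)
    (hB : MeasurableSet B) (hA₀ : A.Nonempty) (hB₀ : B.Nonempty) {α β : ℝ≥0}
    (hα : (α : ℝ≥0∞) ^ Module.finrank ℝ E ≤ μ A) (hβ : (β : ℝ≥0∞) ^ Module.finrank ℝ E ≤ μ B) :
    (α + β : ℝ≥0∞) ^ Module.finrank ℝ E ≤ μ (A + B) := by
  rcases eq_zero_or_pos α with rfl | hα₀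
  · simpa using hβ.trans (measure_le_measure_add_left μ hA₀ B)
  rcases eq_zero_or_pos β with rfl | hβ₀
  · simpa [add_comm] using hα.trans (measure_le_measure_add_left μ hB₀ A)
  have hnormalize {S : Set E} {r : ℝ≥0} (hr : 0 < r) :
      1 ≤ μ (r⁻¹ • S) ↔ (r : ℝ≥0∞) ^ Module.finrank ℝ E ≤ μ S := by
    rw [Measure.addHaar_nnreal_smul, ENNReal.coe_inv hr.ne', ← ENNReal.inv_pow,
      ← ENNReal.div_eq_inv_mul, ENNReal.le_div_iff_mul_le (by simp [hr.ne']) (by simp), one_mul]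
  have hs : 0 < α + β := add_pos hα₀ hβ₀
  have hsum : (α / (α + β)) • α⁻¹ • A + (β / (α + β)) • β⁻¹ • B = (α + β)⁻¹ • (A + B) := by
    simp only [smul_smul, smul_add]
    congr 2 <;> field_simp
  have hmul := hμ.measure_rpow_mul_le (div_pos hα₀ hs) (div_pos hβ₀ hs)
    (by rw [← add_div, div_self hs.ne']) (hA.const_smul₀ α⁻¹) (hB.const_smul₀ β⁻¹)
  rw [hsum] at hmul
  rw [← ENNReal.coe_add, ← hnormalize hs]
  refine le_trans ?_ hmul
  exact one_le_mul (ENNReal.one_le_rpow ((hnormalize hα₀).2 hα) (by positivity))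
    (ENNReal.one_le_rpow ((hnormalize hβ₀).2 hβ) (by positivity))

theorem brunn_minkowski_real (hμ : IsPrekopaLeindler μ) (hn : Module.finrank ℝ E ≠ 0)
    (hA : MeasurableSet A) (hB : MeasurableSet B) (hA₀ : A.Nonempty) (hB₀ : B.Nonempty)
    (hAB : μ (A + B) ≠ ⊤) :
    (μ.real A ^ (Module.finrank ℝ E : ℝ)⁻¹ + μ.real B ^ (Module.finrank ℝ E : ℝ)⁻¹) ^
      Module.finrank ℝ E ≤ μ.real (A + B) := by
  have hA_top : μ A ≠ ⊤ := ne_top_of_le_ne_top hAB <| by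
    rw [add_comm]; exact measure_le_measure_add_left μ hB₀ A
  have hB_top : μ B ≠ ⊤ := ne_top_of_le_ne_top hAB (measure_le_measure_add_left μ hA₀ B)
  have hroot {S : Set E} (hS : μ S ≠ ⊤) :
      (((μ S).toNNReal ^ (Module.finrank ℝ E : ℝ)⁻¹ : ℝ≥0) : ℝ≥0∞) ^ Module.finrank ℝ E = μ S := by
    rw [← ENNReal.coe_pow, NNReal.rpow_inv_natCast_pow _ hn, ENNReal.coe_toNNReal hS]
  have := ENNReal.toReal_mono hAB
    (brunn_minkowski_pow hμ hA hB hA₀ hB₀ (hroot hA_top).le (hroot hB_top).le)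
  simpa [measureReal_def, ← ENNReal.coe_add, ← ENNReal.coe_toNNReal_eq_toReal] using this

end

end IsPrekopaLeindler

/-- Observation `obs:L2`: description of the Lyusternik region for two sets.
Given nonnegative reals `a, b, c`, there are nonempty compact sets `A, B ⊆ ℝ^d`
with `|A| = a`, `|B| = b`, `|A + B| = c` if and only if
`c ≥ (a^{1/d} + b^{1/d})^d`. -/
theorem lyusternik_region_two_sets
    (d : ℕ) (hd : 1 ≤ d) (a b c : ℝ) (ha : 0 ≤ a) (hb : 0 ≤ b) (hc : 0 ≤ c) :
    (∃ A B : Set (Fin d → ℝ),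
      A.Nonempty ∧ B.Nonempty ∧ IsCompact A ∧ IsCompact B ∧
      (volume A).toReal = a ∧ (volume B).toReal = b ∧
      (volume (A + B)).toReal = c) ↔
    (a ^ (1 / (d : ℝ)) + b ^ (1 / (d : ℝ))) ^ (d : ℝ) ≤ c := by
  have hd₀ : d ≠ 0 := by omega
  rw [Real.rpow_natCast, one_div]
  constructor
  · rintro ⟨A, B, hA₀, hB₀, hA, hB, rfl, rfl, rfl⟩
    simpa [measureReal_def] using (IsPrekopaLeindler.volume_pi d).brunn_minkowski_real (by simpa)
      hA.measurableSet hB.measurableSet hA₀ hB₀ (hA.add hB).measure_lt_top.ne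
  · intro h
    have hroots : a ^ (d : ℝ)⁻¹ + b ^ (d : ℝ)⁻¹ ≤ c ^ (d : ℝ)⁻¹ :=
      le_of_pow_le_pow_left₀ hd₀ (Real.rpow_nonneg hc _)
        (h.trans_eq (Real.rpow_inv_natCast_pow hc hd₀).symm)
    simpa [measureReal_def, Real.rpow_inv_natCast_pow, ha, hb, hc, hd₀] using
      exists_isCompact_volume_add_pi (ι := Fin d) (Real.rpow_nonneg ha _) (Real.rpow_nonneg hb _)
        hroots
end

section
/- For every d ≥ 1 there exist nonempty compact subsets A, B, C of ℝ^d such that |A + B + C| + |A| < |A + B| + |A + C|; that is, the volume functional is not supermodular with respect to Minkowski summation in any dimension. (In dimension 1 one may take A = {0,1} and B = C = [0,1]; in dimension d ≥ 2 one may take A = {0,1,…,k}^d for k large and B = C = [0,1]^d.) -/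
/-!
Thicken a compact set `K` of positive measure so little that its measure stays below `2 |K|`: there
is a compact neighbourhood `V` of `0` with `|K + V + V| < 2 |K|`. By compactness `K ⊆ A + V` for
some finite `A ⊆ K`. With `B = C = V`, the set `A` is null while
`|A + V + V| ≤ |K + V + V| < 2 |K| ≤ 2 |A + V|`. If `K` is a cube, a fine grid, that is, a rescaled
`{0, …, k}^d` with `k` large, is such an `A`.
-/

open Pointwise MeasureTheory

open scoped Topology

section AddMonoid

variable {M : Type*} [AddMonoid M] [TopologicalSpace M] [ContinuousAdd M] [LocallyCompactSpace M]

theorem exists_isCompact_nhds_zero_add_add_subset {K U : Set M}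
    (hK : IsCompact K) (hU : IsOpen U) (hKU : K ⊆ U) :
    ∃ V ∈ 𝓝 0, IsCompact V ∧ K + V + V ⊆ U := by
  obtain ⟨W, hW, hKW⟩ := compact_open_separated_add_right hK hU hKU
  obtain ⟨W', hW', hWW'⟩ := exists_nhds_zero_half hW
  obtain ⟨V, hV, hVW', hVc⟩ := local_compact_nhds hW'
  have hVV : V + V ⊆ W := Set.add_subset_iff.2 fun v hv w hw => hWW' v (hVW' hv) w (hVW' hw)
  exact ⟨V, hV, hVc, by grw [add_assoc, hVV, hKW]⟩

theorem exists_isCompact_nhds_zero_measure_add_add_lt [MeasurableSpace M]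
    (μ : Measure M) [μ.OuterRegular] {K : Set M} {r : ENNReal} (hK : IsCompact K) (hr : μ K < r) :
    ∃ V ∈ 𝓝 0, IsCompact V ∧ μ (K + V + V) < r := by
  obtain ⟨U, hKU, hU, hUr⟩ := K.exists_isOpen_lt_of_lt r hr
  obtain ⟨V, hV, hVc, hVU⟩ := exists_isCompact_nhds_zero_add_add_subset hK hU hKU
  exact ⟨V, hV, hVc, (measure_mono hVU).trans_lt hUr⟩

end AddMonoid

section AddGroup

variable {G : Type*} [AddGroup G] [TopologicalSpace G] [ContinuousAdd G]

theorem exists_finite_subset_subset_add_of_isCompact {K V : Set G} (hK : IsCompact K)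
    (hV : V ∈ 𝓝 0) : ∃ A ⊆ K, A.Finite ∧ K ⊆ A + V := by
  obtain ⟨A, hAK, hKA⟩ := hK.elim_nhds_subcover (· +ᵥ V) fun x _ => by
    simpa using vadd_mem_nhds_vadd x hV
  have hAV : (A : Set G) + V = ⋃ x ∈ A, x +ᵥ V := by
    simp only [← vadd_eq_add, ← Set.iUnion_vadd_set, Finset.mem_coe]
  exact ⟨A, hAK, A.finite_toSet, hAV ▸ hKA⟩

theorem volume_not_supermodular_general [LocallyCompactSpace G] [MeasurableSpace G]
    (μ : Measure G) [μ.OuterRegular] [IsFiniteMeasureOnCompacts μ] [NullSingletonClass μ]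
    {K : Set G} (hK : IsCompact K) (hμK : μ K ≠ 0) :
    ∃ A B C : Set G,
      A.Nonempty ∧ B.Nonempty ∧ C.Nonempty ∧
      IsCompact A ∧ IsCompact B ∧ IsCompact C ∧
      μ.real (A + B + C) + μ.real A < μ.real (A + B) + μ.real (A + C) := by
  have hK_lt : μ K < μ K + μ K := ENNReal.lt_add_right hK.measure_ne_top hμK
  obtain ⟨V, hV, hVc, hKV⟩ := exists_isCompact_nhds_zero_measure_add_add_lt μ hK hK_lt
  obtain ⟨A, hAK, hA, hKA⟩ := exists_finite_subset_subset_add_of_isCompact hK hV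
  have hV_ne : V.Nonempty := ⟨0, mem_of_mem_nhds hV⟩
  have hA_ne : A.Nonempty := ((nonempty_of_measure_ne_zero hμK).mono hKA).of_add_left
  have hAV_top : μ (A + V) ≠ ⊤ := (hA.isCompact.add hVc).measure_ne_top
  have hAVV_lt : μ (A + V + V) < μ (A + V) + μ (A + V) := calc
    μ (A + V + V) ≤ μ (K + V + V) := by gcongr
    _ < μ K + μ K := hKV
    _ ≤ μ (A + V) + μ (A + V) := by gcongr
  refine ⟨A, V, V, hA_ne, hV_ne, hV_ne, hA.isCompact, hVc, hVc, ?_⟩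
  calc μ.real (A + V + V) + μ.real A = μ.real (A + V + V) := by
        simp [measureReal_def, hA.measure_zero]
    _ < (μ (A + V) + μ (A + V)).toReal :=
        ENNReal.toReal_strict_mono (ENNReal.add_ne_top.2 ⟨hAV_top, hAV_top⟩) hAVV_lt
    _ = μ.real (A + V) + μ.real (A + V) := ENNReal.toReal_add hAV_top hAV_top

end AddGroup

/-- In every dimension `d ≥ 1` there are nonempty compact sets `A, B, C ⊆ ℝ^d`
witnessing that volume is not supermodular with respect to Minkowski summation:
`|A + B + C| + |A| < |A + B| + |A + C|`. -/
theorem volume_not_supermodular (d : ℕ) (hd : 1 ≤ d) :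
    ∃ A B C : Set (Fin d → ℝ),
      A.Nonempty ∧ B.Nonempty ∧ C.Nonempty ∧
      IsCompact A ∧ IsCompact B ∧ IsCompact C ∧
      (volume (A + B + C)).toReal + (volume A).toReal
        < (volume (A + B)).toReal + (volume (A + C)).toReal := by
  have : Nonempty (Fin d) := ⟨⟨0, hd⟩⟩
  exact volume_not_supermodular_general volume (isCompact_closedBall 0 1)
    (Metric.measure_closedBall_pos volume 0 one_pos).ne'
end

section
/- Let A_1, A_2, A_3 be nonempty compact subsets of ℝ. Then 2 |A_1 + A_2 + A_3| ≥ |A_1 + A_2| + |A_2 + A_3| + |A_1 + A_3|. -/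
open Pointwise MeasureTheory

/-!
Suppose first that each `Aᵢ` has a least element `mᵢ` and a greatest element `Mᵢ`, and cut
`A₂ + A₃` at `M₂ + m₃`. The part above the cut, translated by `M₁`, and the translate
`A₁ + A₂ + m₃` lie in `A₁ + A₂ + A₃` on opposite sides of `M₁ + M₂ + m₃`. The part below the cut,
translated by `m₁`, and the translate `A₁ + M₂ + A₃` lie in `A₁ + A₂ + A₃` on opposite sides of
`m₁ + M₂ + m₃`. Adding the two resulting bounds gives the inequality. An arbitrary nonempty set is
an increasing countable union of its truncations between two of its own points, and measures
are continuous from below even along non-measurable sets.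
-/

open Filter Set TopologicalSpace
open scoped Topology

section OrderTopology

variable {α : Type*} [LinearOrder α] [TopologicalSpace α] [OrderTopology α]
  [SecondCountableTopology α]

/- The subspace topology on `s` need not be its order topology, but it is finer, so the order
topology inherits separability. -/
lemma isCountablyGenerated_atTop_coe (s : Set α) : (atTop : Filter s).IsCountablyGenerated := by
  have h_le : instTopologicalSpaceSubtype ≤ Preorder.topology s :=
    induced_topology_le_preorder Iff.rfl
  let _ : TopologicalSpace s := Preorder.topology s
  have : OrderTopology s := ⟨rfl⟩
  have : SeparableSpace s :=
    @DenseRange.separableSpace s s instTopologicalSpaceSubtype inferInstance _ id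
      Function.surjective_id.denseRange (continuous_id_of_le h_le)
  infer_instance

lemma isCountablyGenerated_atBot_coe (s : Set α) : (atBot : Filter s).IsCountablyGenerated :=
  isCountablyGenerated_atTop_coe (α := αᵒᵈ) s

lemma exists_monotone_iUnion_eq_isLeast_isGreatest {s : Set α} (hs : s.Nonempty) :
    ∃ t : ℕ → Set α, Monotone t ∧ ⋃ n, t n = s ∧
      ∀ n, (∃ a, IsLeast (t n) a) ∧ ∃ b, IsGreatest (t n) b := by
  have := isCountablyGenerated_atTop_coe s
  have := isCountablyGenerated_atBot_coe s
  have : Nonempty s := hs.to_subtype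
  let c : s := Classical.arbitrary s
  obtain ⟨x, hx_anti, hx⟩ := exists_seq_antitone_tendsto_atTop_atBot s
  obtain ⟨y, hy_mono, hy⟩ := exists_seq_monotone_tendsto_atTop_atTop s
  have h_le (n : ℕ) : x n ⊓ c ≤ y n ⊔ c := inf_le_right.trans le_sup_right
  refine ⟨fun n ↦ s ∩ Icc ↑(x n ⊓ c) ↑(y n ⊔ c), fun i j hij ↦ ?_, ?_, fun n ↦ ⟨?_, ?_⟩⟩
  · exact inter_subset_inter_right s <|
      Icc_subset_Icc (inf_le_inf_right c (hx_anti hij)) (sup_le_sup_right (hy_mono hij) c)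
  · refine (iUnion_subset fun n ↦ inter_subset_left).antisymm fun z hz ↦ ?_
    obtain ⟨n, hxn, hyn⟩ :=
      ((hx.eventually_le_atBot ⟨z, hz⟩).and (hy.eventually_ge_atTop ⟨z, hz⟩)).exists
    have hxz : x n ⊓ c ≤ ⟨z, hz⟩ := inf_le_of_left_le hxn
    have hzy : ⟨z, hz⟩ ≤ y n ⊔ c := le_sup_of_le_left hyn
    exact mem_iUnion.2 ⟨n, hz, hxz, hzy⟩
  · exact ⟨_, ⟨(x n ⊓ c).2, left_mem_Icc.2 (h_le n)⟩, fun _ hz ↦ hz.2.1⟩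
  · exact ⟨_, ⟨(y n ⊔ c).2, right_mem_Icc.2 (h_le n)⟩, fun _ hz ↦ hz.2.2⟩

end OrderTopology

lemma measure_inter_Iic_add_measure_inter_Ici {α : Type*} [LinearOrder α] [TopologicalSpace α]
    [ClosedIicTopology α] [MeasurableSpace α] [OpensMeasurableSpace α] (μ : Measure α)
    [NullSingletonClass μ] (s : Set α) (c : α) :
    μ (s ∩ Iic c) + μ (s ∩ Ici c) = μ s := by
  have h_ae : (s ∩ Ici c : Set α) =ᵐ[μ] (s \ Iic c : Set α) := by
    rw [sdiff_eq, compl_Iic]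
    exact (EventuallyEq.refl _ s).inter Ioi_ae_eq_Ici.symm
  rw [measure_congr h_ae, measure_inter_add_sdiff s measurableSet_Iic]

lemma tendsto_measure_add_of_monotone {ι M : Type*} [SemilatticeSup ι]
    [(atTop : Filter ι).IsCountablyGenerated] [Add M] [MeasurableSpace M] (μ : Measure M)
    {s t : ι → Set M} (hs : Monotone s) (ht : Monotone t) :
    Tendsto (fun i ↦ μ (s i + t i)) atTop (𝓝 (μ ((⋃ i, s i) + ⋃ i, t i))) := by
  have h_union : (⋃ i, s i) + ⋃ i, t i = ⋃ i, (s i + t i) := by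
    simp_rw [← add_image_prod, ← image_iUnion]
    rw [iUnion_prod_of_monotone hs ht]
  rw [h_union]
  exact tendsto_measure_iUnion_atTop fun i j hij ↦ add_subset_add (hs hij) (ht hij)

section AddGroup

variable {G : Type*} [AddGroup G] [MeasurableSpace G] [MeasurableAdd G] (μ : Measure G)
  [μ.IsAddRightInvariant]

lemma measure_le_of_mapsTo_add_right {s t : Set G} {g : G} (h : MapsTo (· + g) s t) :
    μ s ≤ μ t :=
  (measure_mono h).trans_eq (measure_preimage_add_right μ g t)

lemma measure_add_measure_le_of_mapsTo_Iic_of_mapsTo_Ici [LinearOrder G] [TopologicalSpace G]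
    [ClosedIicTopology G] [OpensMeasurableSpace G] [NullSingletonClass μ]
    {s t r : Set G} {u v c : G}
    (hs : MapsTo (· + u) s (r ∩ Iic c)) (ht : MapsTo (· + v) t (r ∩ Ici c)) :
    μ s + μ t ≤ μ r :=
  calc μ s + μ t ≤ μ (r ∩ Iic c) + μ (r ∩ Ici c) :=
        add_le_add (measure_le_of_mapsTo_add_right μ hs) (measure_le_of_mapsTo_add_right μ ht)
    _ = μ r := measure_inter_Iic_add_measure_inter_Ici μ r c

end AddGroup

section OrderedAddCommGroup

variable {G : Type*} [AddCommGroup G] [LinearOrder G] [IsOrderedAddMonoid G]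
  [TopologicalSpace G] [MeasurableSpace G] [OpensMeasurableSpace G] [MeasurableAdd G]
  (μ : Measure G) [μ.IsAddRightInvariant] [NullSingletonClass μ] {A B C : Set G}

lemma measure_add_add_measure_inter_Ici_le [ClosedIicTopology G] {a b c : G}
    (ha : IsGreatest A a) (hb : b ∈ upperBounds B) (hc : c ∈ C) :
    μ (A + B) + μ ((B + C) ∩ Ici (b + c)) ≤ μ (A + B + C) := by
  apply measure_add_measure_le_of_mapsTo_Iic_of_mapsTo_Ici μ (u := c) (v := a) (c := a + b + c)
  · rintro _ ⟨x, hx, y, hy, rfl⟩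
    exact ⟨add_mem_add (add_mem_add hx hy) hc,
      add_le_add_left (add_le_add (ha.2 hx) (hb hy)) c⟩
  · rintro w ⟨hw, h_le⟩
    change w + a ∈ _
    rw [add_comm w, add_assoc A, add_assoc a]
    exact ⟨add_mem_add ha.1 hw, add_le_add_right h_le a⟩

lemma measure_inter_Iic_add_measure_add_le [ClosedIicTopology G] {a b c : G}
    (ha : IsLeast A a) (hb : b ∈ B) (hc : c ∈ lowerBounds C) :
    μ ((B + C) ∩ Iic (b + c)) + μ (A + C) ≤ μ (A + B + C) := by
  apply measure_add_measure_le_of_mapsTo_Iic_of_mapsTo_Ici μ (u := a) (v := b) (c := a + b + c)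
  · rintro w ⟨hw, h_le⟩
    change w + a ∈ _
    rw [add_comm w, add_assoc A, add_assoc a]
    exact ⟨add_mem_add ha.1 hw, add_le_add_right h_le a⟩
  · rintro _ ⟨x, hx, z, hz, rfl⟩
    rw [add_right_comm A, add_right_comm a]
    exact ⟨add_mem_add (add_mem_add hx hz) hb, add_le_add_left (add_le_add (ha.2 hx) (hc hz)) b⟩

lemma leave_one_out_three_sets_of_isLeast_of_isGreatest [ClosedIicTopology G]
    {m₁ M₁ M₂ m₃ : G}
    (hm₁ : IsLeast A m₁) (hM₁ : IsGreatest A M₁) (hM₂ : IsGreatest B M₂) (hm₃ : IsLeast C m₃) :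
    μ (A + B) + μ (B + C) + μ (A + C) ≤ 2 * μ (A + B + C) := by
  have h_cut := measure_inter_Iic_add_measure_inter_Ici μ (B + C) (M₂ + m₃)
  have h_above := measure_add_add_measure_inter_Ici_le μ hM₁ hM₂.2 hm₃.1
  have h_below := measure_inter_Iic_add_measure_add_le μ hm₁ hM₂.1 hm₃.2
  calc μ (A + B) + μ (B + C) + μ (A + C)
      = (μ (A + B) + μ ((B + C) ∩ Ici (M₂ + m₃))) +
          (μ ((B + C) ∩ Iic (M₂ + m₃)) + μ (A + C)) := by rw [← h_cut]; ring
    _ ≤ μ (A + B + C) + μ (A + B + C) := add_le_add h_above h_below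
    _ = 2 * μ (A + B + C) := (two_mul _).symm

theorem leave_one_out_three_sets_general [OrderTopology G] [SecondCountableTopology G]
    (hA : A.Nonempty) (hB : B.Nonempty) (hC : C.Nonempty) :
    μ (A + B) + μ (B + C) + μ (A + C) ≤ 2 * μ (A + B + C) := by
  obtain ⟨S, hS, rfl, hS_ext⟩ := exists_monotone_iUnion_eq_isLeast_isGreatest hA
  obtain ⟨T, hT, rfl, hT_ext⟩ := exists_monotone_iUnion_eq_isLeast_isGreatest hB
  obtain ⟨U, hU, rfl, hU_ext⟩ := exists_monotone_iUnion_eq_isLeast_isGreatest hC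
  have h_lim := ((tendsto_measure_add_of_monotone μ hS hT).add
    (tendsto_measure_add_of_monotone μ hT hU)).add (tendsto_measure_add_of_monotone μ hS hU)
  refine le_of_tendsto' h_lim fun n ↦ ?_
  obtain ⟨⟨m₁, hm₁⟩, M₁, hM₁⟩ := hS_ext n
  obtain ⟨-, M₂, hM₂⟩ := hT_ext n
  obtain ⟨⟨m₃, hm₃⟩, -⟩ := hU_ext n
  calc μ (S n + T n) + μ (T n + U n) + μ (S n + U n) ≤ 2 * μ (S n + T n + U n) :=
        leave_one_out_three_sets_of_isLeast_of_isGreatest μ hm₁ hM₁ hM₂ hm₃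
    _ ≤ 2 * μ ((⋃ i, S i) + (⋃ i, T i) + ⋃ i, U i) := by
        gcongr <;> exact subset_iUnion _ n

end OrderedAddCommGroup

/-- The leave-one-out fractional superadditivity for three compact subsets of `ℝ`:
`2|A₁ + A₂ + A₃| ≥ |A₁ + A₂| + |A₂ + A₃| + |A₁ + A₃|`. -/
theorem leave_one_out_three_sets
    (A₁ A₂ A₃ : Set ℝ)
    (h₁ : A₁.Nonempty) (h₂ : A₂.Nonempty) (h₃ : A₃.Nonempty)
    (hc₁ : IsCompact A₁) (hc₂ : IsCompact A₂) (hc₃ : IsCompact A₃) :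
    (volume (A₁ + A₂)).toReal + (volume (A₂ + A₃)).toReal
        + (volume (A₁ + A₃)).toReal
      ≤ 2 * (volume (A₁ + A₂ + A₃)).toReal := by
  have h_fin := ((hc₁.add hc₂).add hc₃).measure_ne_top (μ := volume)
  simpa [ENNReal.toReal_add, (hc₁.add hc₂).measure_ne_top, (hc₂.add hc₃).measure_ne_top,
    (hc₁.add hc₃).measure_ne_top] using
    ENNReal.toReal_mono (ENNReal.mul_ne_top ENNReal.ofNat_ne_top h_fin)
      (leave_one_out_three_sets_general volume h₁ h₂ h₃)
end

section
/- Let A = [0, 1/2] ∪ [1, 3/2] ⊆ ℝ. Then |A + A + A| = (3/2)|A + A|; explicitly, |A + A| = 3 and |A + A + A| = 9/2. In particular, equality holds for this non-convex set A in the fractional superadditivity inequality |A_1 + A_2 + A_3| ≥ (1/2)(|A_1 + A_2| + |A_2 + A_3| + |A_1 + A_3|) with A_1 = A_2 = A_3 = A. -/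
open Pointwise MeasureTheory

/-!
An interval is long enough to bridge a gap when its length is at least that of the gap. If two
intervals are separated by a gap no longer than either of them, then adding either interval to
their union already fills the gap, so all the `n`-fold sumsets with `n ≥ 2` of the union are
intervals. They coincide with the `n`-fold sumsets of the convex hull, whose measure is linear
in `n`.
-/

section SumsetsOfTwoIntervals

open Set

variable {α : Type*} [AddCommMonoid α] [LinearOrder α] [IsOrderedAddMonoid α]
  [AddLeftReflectLE α] [ExistsAddOfLE α] {a b c d u v : α}

-- `hgap` is `c - b ≤ v - u` without subtraction: the gap is at most the length of `Icc u v`.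
theorem Icc_add_Icc_union_Icc (huv : u ≤ v) (hab : a ≤ b) (hcd : c ≤ d) (hac : a ≤ c)
    (hbd : b ≤ d) (hgap : u + c ≤ v + b) :
    Icc u v + (Icc a b ∪ Icc c d) = Icc (u + a) (v + d) := by
  have hleft : u + a ≤ u + c := by gcongr
  have hright : v + b ≤ v + d := by gcongr
  rw [add_union, Icc_add_Icc huv hab, Icc_add_Icc huv hcd,
    Icc_union_Icc' hgap (add_le_add huv (hac.trans hcd)), min_eq_left hleft, max_eq_right hright]

theorem Icc_union_Icc_add_self (hab : a ≤ b) (hcd : c ≤ d) (hac : a ≤ c) (hbd : b ≤ d)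
    (hgap_left : a + c ≤ b + b) (hgap_right : c + c ≤ d + b) :
    (Icc a b ∪ Icc c d) + (Icc a b ∪ Icc c d) = Icc (a + a) (d + d) := by
  have hoverlap : c + a ≤ b + d := by
    calc c + a = a + c := add_comm c a
      _ ≤ b + b := hgap_left
      _ ≤ b + d := by gcongr
  rw [union_add, Icc_add_Icc_union_Icc hab hab hcd hac hbd hgap_left,
    Icc_add_Icc_union_Icc hcd hab hcd hac hbd hgap_right,
    Icc_union_Icc' hoverlap (add_le_add (hab.trans hbd) (hab.trans hbd)),
    min_eq_left (by gcongr), max_eq_right (by gcongr)]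

theorem nsmul_Icc_union_Icc (hab : a ≤ b) (hcd : c ≤ d) (hac : a ≤ c) (hbd : b ≤ d)
    (hgap_left : a + c ≤ b + b) (hgap_right : c + c ≤ d + b) {n : ℕ} (hn : 2 ≤ n) :
    n • (Icc a b ∪ Icc c d) = Icc (n • a) (n • d) := by
  have had : a ≤ d := hab.trans hbd
  induction n, hn using Nat.le_induction with
  | base =>
    simp only [two_nsmul, Icc_union_Icc_add_self hab hcd hac hbd hgap_left hgap_right]
  | succ n hn ih =>
    have hgap : n • a + c ≤ n • d + b := by
      obtain ⟨m, rfl⟩ := Nat.exists_eq_add_of_le' (one_le_two.trans hn)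
      calc (m + 1) • a + c = m • a + (a + c) := by rw [succ_nsmul, add_assoc]
        _ ≤ m • d + (d + b) :=
          add_le_add (nsmul_le_nsmul_right had m) (hgap_left.trans (by gcongr))
        _ = (m + 1) • d + b := by rw [succ_nsmul, add_assoc]
    rw [succ_nsmul, ih,
      Icc_add_Icc_union_Icc (nsmul_le_nsmul_right had n) hab hcd hac hbd hgap,
      succ_nsmul, succ_nsmul]

theorem volume_real_nsmul_Icc_union_Icc {a b c d : ℝ} (hab : a ≤ b) (hcd : c ≤ d) (hac : a ≤ c)
    (hbd : b ≤ d) (hgap_left : a + c ≤ b + b) (hgap_right : c + c ≤ d + b) {n : ℕ} (hn : 2 ≤ n) :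
    volume.real (n • (Icc a b ∪ Icc c d)) = n * (d - a) := by
  rw [nsmul_Icc_union_Icc hab hcd hac hbd hgap_left hgap_right hn,
    Real.volume_real_Icc_of_le (nsmul_le_nsmul_right (hab.trans hbd) n), ← nsmul_sub,
    nsmul_eq_mul]

end SumsetsOfTwoIntervals

/-- For the non-convex set `A = [0, 1/2] ∪ [1, 3/2]` one has `|A + A| = 3`,
`|A + A + A| = 9/2`, so `|A + A + A| = (3/2)|A + A|`: equality holds in the
fractional superadditivity inequality
`|A₁+A₂+A₃| ≥ (1/2)(|A₁+A₂| + |A₂+A₃| + |A₁+A₃|)` with `A₁ = A₂ = A₃ = A`. -/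
theorem equality_case_nonconvex_example
    (A : Set ℝ) (hA : A = Set.Icc (0 : ℝ) (1 / 2) ∪ Set.Icc (1 : ℝ) (3 / 2)) :
    (volume (A + A)).toReal = 3 ∧
    (volume (A + A + A)).toReal = 9 / 2 ∧
    (volume (A + A + A)).toReal = (3 / 2) * (volume (A + A)).toReal := by
  have volume_nsmul {n : ℕ} (hn : 2 ≤ n) : (volume (n • A)).toReal = n * (3 / 2 - 0) := by
    rw [hA]
    apply volume_real_nsmul_Icc_union_Icc (hn := hn) <;> norm_num
  have volume_two : (volume (A + A)).toReal = 3 := by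
    rw [← two_nsmul, volume_nsmul le_rfl]
    norm_num
  have volume_three : (volume (A + A + A)).toReal = 9 / 2 := by
    rw [← two_nsmul, ← succ_nsmul, volume_nsmul (by norm_num)]
    norm_num
  refine ⟨volume_two, volume_three, ?_⟩
  rw [volume_two, volume_three]
  norm_num
end
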